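/- arXiv:2011.02984 — 2 statements merged into one kernel-verified Lean document; each statement's English description precedes it below -/
import Mathlib

section
/- For every integer n ≥ 1: if n is odd then N̄(0,4,n) > N̄(1,4,n), and if n is even then N̄(0,4,n) < N̄(1,4,n). -/
/-- An overpartition of `n`: a partition of `n` together with a chosen subset of its
distinct part sizes (the overlined parts). -/
def Overpartition (n : ℕ) : Type :=
  {P : n.Partition × Finset ℕ // P.2 ⊆ P.1.parts.toFinset}

/-- The Dyson rank of an overpartition: largest part minus number of parts. -/
def Overpartition.rank {n : ℕ} (P : Overpartition n) : ℤ :=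
  (P.1.1.parts.sup : ℤ) - (P.1.1.parts.card : ℤ)

/-- `nbarRank m n` is the number of overpartitions of `n` with rank `m`. -/
noncomputable def nbarRank (m : ℤ) (n : ℕ) : ℕ :=
  Nat.card {P : Overpartition n // P.rank = m}

/-- `nbar a c n` is the number of overpartitions of `n` with rank congruent to `a` mod `c`. -/
noncomputable def nbar (a : ℤ) (c : ℕ) (n : ℕ) : ℕ :=
  Nat.card {P : Overpartition n // P.rank ≡ a [ZMOD (c : ℤ)]}

/-- `pbar n` is the number of overpartitions of `n`. -/
noncomputable def pbar (n : ℕ) : ℕ := Nat.card (Overpartition n)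
open PowerSeries in
/-- weighted generating function of partitions with parts at most `L` -/
noncomputable def ovGen (w : ℂ) (L : ℕ) : PowerSeries ℂ :=
  Nat.Partition.genFun (fun k c => if k ≤ L then 2 * w ^ c else 0)

open PowerSeries PowerSeries.WithPiTopology in
theorem ovGen_factor (w : ℂ) (i : ℕ) :
    (1 + ∑' j : ℕ, (2 * w ^ (j + 1)) • (X : PowerSeries ℂ) ^ ((i + 1) * (j + 1)))
      * (1 - C w * X ^ (i + 1)) = 1 + C w * X ^ (i + 1) := by
  have h0 : constantCoeff (C w * X ^ (i + 1) : PowerSeries ℂ) = 0 := by simp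
  have hs := summable_pow_of_constantCoeff_eq_zero h0
  have h1 := tsum_pow_mul_one_sub_of_constantCoeff_eq_zero h0
  have h2 : (fun j : ℕ => (2 * w ^ (j + 1)) • (X : PowerSeries ℂ) ^ ((i + 1) * (j + 1)))
      = fun j : ℕ => (2 * (C w * X ^ (i + 1))) * (C w * X ^ (i + 1)) ^ j := by
    funext j
    rw [smul_eq_C_mul, map_mul, map_pow]
    have h2C : (C (2 : ℂ) : PowerSeries ℂ) = 2 := map_ofNat C 2
    rw [h2C]
    ring
  rw [h2, hs.tsum_mul_left]
  linear_combination (2 * (C w * X ^ (i + 1))) * h1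

open PowerSeries PowerSeries.WithPiTopology in
theorem ovGen_eq_prod (w : ℂ) (L : ℕ) :
    ovGen w L = ∏ i ∈ Finset.range L,
      (1 + ∑' j : ℕ, (2 * w ^ (j + 1)) • (X : PowerSeries ℂ) ^ ((i + 1) * (j + 1))) := by
  have h := Nat.Partition.hasProd_genFun (fun k c => if k ≤ L then 2 * w ^ c else (0 : ℂ))
  have h2 := hasProd_prod_of_ne_finset_one (L := SummationFilter.unconditional ℕ) (s := Finset.range L)
    (f := fun i ↦ (1 : PowerSeries ℂ) + ∑' j, (if i + 1 ≤ L then 2 * w ^ (j + 1) else (0 : ℂ)) • X ^ ((i + 1) * (j + 1)))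
    (by
      intro b hb
      have : ¬ (b + 1 ≤ L) := by simpa using hb
      simp [this])
  rw [ovGen, h.unique h2]
  refine Finset.prod_congr rfl fun i hi => ?_
  have : i + 1 ≤ L := by simpa using hi
  simp [this]

open PowerSeries in
theorem ovGen_zero (w : ℂ) : ovGen w 0 = 1 := by simp [ovGen_eq_prod]

open PowerSeries in
theorem ovGen_succ (w : ℂ) (L : ℕ) :
    ovGen w (L + 1) * (1 - C w * X ^ (L + 1)) = ovGen w L * (1 + C w * X ^ (L + 1)) := by
  rw [ovGen_eq_prod, ovGen_eq_prod, Finset.prod_range_succ, mul_assoc, ovGen_factor]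

theorem coeff_ovGen (w : ℂ) (L n : ℕ) :
    PowerSeries.coeff n (ovGen w L) = ∑ p : n.Partition,
      if p.parts.sup ≤ L then 2 ^ p.parts.toFinset.card * w ^ p.parts.card else 0 := by
  rw [ovGen, Nat.Partition.coeff_genFun]
  refine Finset.sum_congr rfl fun p _ => ?_
  rw [Finsupp.prod, Multiset.toFinsupp_support]
  simp only [Multiset.toFinsupp_apply]
  split_ifs with h
  · rw [Multiset.sup_le] at h
    rw [Finset.prod_congr rfl (g := fun x => 2 * w ^ Multiset.count x p.parts), Finset.prod_mul_distrib,
      Finset.prod_const, Finset.prod_pow_eq_pow_sum, Multiset.toFinset_sum_count_eq]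
    intro x hx
    rw [if_pos (h x (by simpa using hx))]
  · rw [Multiset.sup_le] at h
    push Not at h
    obtain ⟨b, hb, hb2⟩ := h
    apply Finset.prod_eq_zero (i := b) (by simpa using hb)
    simp [hb2]

noncomputable instance ovFintype (n : ℕ) : Fintype (Overpartition n) :=
  haveI : DecidablePred fun P : n.Partition × Finset ℕ => P.2 ⊆ P.1.parts.toFinset :=
    fun _ => Classical.dec _
  haveI : Finite (Overpartition n) := by
    refine Finite.of_injective (β := Σ p : n.Partition, {s : Finset ℕ // s ∈ p.parts.toFinset.powerset})
      (fun P => ⟨P.1.1, ⟨P.1.2, Finset.mem_powerset.mpr P.2⟩⟩) ?_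
    rintro ⟨⟨p, s⟩, h⟩ ⟨⟨p', s'⟩, h'⟩ e
    simp only [Sigma.mk.injEq] at e
    obtain ⟨rfl, e⟩ := e
    simp at e
    subst e
    rfl
  Fintype.ofFinite _

theorem sum_overpartition (n : ℕ) (g : n.Partition → ℂ) :
    ∑ P : Overpartition n, g P.1.1 = ∑ p : n.Partition, 2 ^ p.parts.toFinset.card * g p := by
  let e : Overpartition n ≃ Σ p : n.Partition, {s : Finset ℕ // s ∈ p.parts.toFinset.powerset} :=
    { toFun := fun P => ⟨P.1.1, ⟨P.1.2, Finset.mem_powerset.mpr P.2⟩⟩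
      invFun := fun Q => ⟨(Q.1, Q.2.1), Finset.mem_powerset.mp Q.2.2⟩
      left_inv := fun _ => rfl
      right_inv := fun _ => rfl }
  rw [Fintype.sum_equiv e (fun P => g P.1.1) (fun Q => g Q.1) (fun _ => rfl), Fintype.sum_sigma]
  refine Finset.sum_congr rfl fun p _ => ?_
  simp [Finset.card_powerset]

theorem rank_sum (n : ℕ) (hn : 1 ≤ n) (z : ℂ) (hz : z ≠ 0) :
    ∑ P : Overpartition n, z ^ P.rank =
      ∑ L ∈ Finset.range n, z ^ (L + 1) *
        (PowerSeries.coeff n (ovGen z⁻¹ (L + 1)) - PowerSeries.coeff n (ovGen z⁻¹ L)) := by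
  have h1 := sum_overpartition n (fun p => z ^ ((p.parts.sup : ℤ) - (p.parts.card : ℤ)))
  have h2 : ∑ P : Overpartition n, z ^ P.rank = ∑ P : Overpartition n,
    (fun p : n.Partition => z ^ ((p.parts.sup : ℤ) - (p.parts.card : ℤ))) P.1.1 := rfl
  rw [h2, h1]
  simp only [coeff_ovGen, ← Finset.sum_sub_distrib, Finset.mul_sum]
  rw [Finset.sum_comm]
  refine Finset.sum_congr rfl fun p _ => ?_
  have hle : p.parts.sup ≤ n := Multiset.sup_le.mpr fun b hb => p.le_of_mem_parts hb
  have hpos : 1 ≤ p.parts.sup := by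
    by_contra hcon
    have h0 : p.parts.sup ≤ 0 := by omega
    rw [Multiset.sup_le] at h0
    have : p.parts = 0 := by
      rw [Multiset.eq_zero_iff_forall_notMem]
      intro a ha
      have := h0 a ha
      have := p.parts_pos ha
      omega
    have hs := p.parts_sum
    rw [this] at hs
    simp at hs
    omega
  obtain ⟨m, hm⟩ : ∃ m, p.parts.sup = m + 1 := ⟨p.parts.sup - 1, by omega⟩
  rw [Finset.sum_eq_single m]
  · rw [hm, zpow_sub₀ hz]
    simp
    have : (z ^ ((m : ℤ) + 1)) = z ^ (m + 1) := by norm_cast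
    rw [this]
    ring
  · intro b hb hbm
    rw [hm]
    by_cases h : m + 1 ≤ b
    · simp [h, (by omega : m ≤ b)]
    · have h' : ¬ m ≤ b := by omega
      rw [if_neg (by omega), if_neg h]
      simp
  · intro h
    simp at h
    omega
section PartB
open PowerSeries

/-- base `i q^k` -/
noncomputable def wI (k : ℕ) : PowerSeries ℂ := C Complex.I * X ^ k

noncomputable def pI (k m : ℕ) : PowerSeries ℂ :=
  ∏ l ∈ Finset.range m, ((1 - wI (k + l)) * (1 + wI (k + l))⁻¹)

noncomputable def sI (k m : ℕ) : PowerSeries ℂ := wI k ^ m * pI k m * (1 + wI (k + m))⁻¹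

noncomputable def cI (k m : ℕ) : PowerSeries ℂ :=
  wI k ^ m * pI k m * (1 - wI k ^ 2 * X ^ m) * (1 - wI k)⁻¹ * (1 + wI (k + m))⁻¹

theorem wI_const (k : ℕ) (hk : 1 ≤ k) : constantCoeff (wI k) = 0 := by
  have : k ≠ 0 := by omega
  simp [wI, this]

theorem inv_add_wI (k : ℕ) (hk : 1 ≤ k) : (1 + wI k)⁻¹ * (1 + wI k) = 1 := by
  apply PowerSeries.inv_mul_cancel
  simp [wI_const k hk]

theorem inv_sub_wI (k : ℕ) (hk : 1 ≤ k) : (1 - wI k)⁻¹ * (1 - wI k) = 1 := by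
  apply PowerSeries.inv_mul_cancel
  simp [wI_const k hk]

theorem wI_add (k m : ℕ) : wI (k + m) = wI k * X ^ m := by
  simp only [wI, pow_add]; ring

theorem wI_sq (k : ℕ) : wI k ^ 2 = - X ^ (2 * k) := by
  have h : (C Complex.I : PowerSeries ℂ) ^ 2 = -1 := by
    rw [← map_pow, Complex.I_sq]; simp
  rw [wI, mul_pow, h, ← pow_mul, mul_comm k 2]; ring

theorem pI_shift (k m : ℕ) (hk : 1 ≤ k) :
    pI (k + 1) m = pI k m * ((1 + wI k) * (1 - wI (k + m)) * (1 - wI k)⁻¹ * (1 + wI (k + m))⁻¹) := by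
  have h1 : pI k (m + 1) = pI k m * ((1 - wI (k + m)) * (1 + wI (k + m))⁻¹) := by
    rw [pI, Finset.prod_range_succ, ← pI]
  have h2 : pI k (m + 1) = pI (k + 1) m * ((1 - wI k) * (1 + wI k)⁻¹) := by
    rw [pI, Finset.prod_range_succ', pI]
    congr 1
    refine Finset.prod_congr rfl fun l _ => ?_
    rw [show k + (l + 1) = k + 1 + l by ring]
  have ha := inv_add_wI k hk
  have hb := inv_sub_wI k hk
  rw [h1] at h2
  linear_combination (-(1 + wI k) * (1 - wI k)⁻¹) * h2 - pI (k+1) m * (1 + wI k)⁻¹ * (1 + wI k) * hb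
    - pI (k+1) m * ha

theorem sI_step (k m : ℕ) (hk : 1 ≤ k) :
    sI k m - X ^ (2 * k + 1) * sI (k + 1) m = cI k m - cI k (m + 1) := by
  have hw := wI_sq k
  have h1 : pI k (m + 1) = pI k m * ((1 - wI (k + m)) * (1 + wI (k + m))⁻¹) := by
    rw [pI, Finset.prod_range_succ, ← pI]
  have he := inv_sub_wI k hk
  have hb := inv_add_wI (k + m + 1) (by omega)
  have hX : (X : PowerSeries ℂ) ^ (2 * k + 1) = - (wI k ^ 2 * X) := by
    rw [hw]; ring
  rw [sI, sI, cI, cI, h1, pI_shift k m hk, hX, show k + 1 + m = k + m + 1 by ring,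
    show k + (m + 1) = k + m + 1 by ring, wI_add k 1]
  rw [show wI (k + m + 1) = wI k * X ^ m * X by rw [add_assoc, wI_add]; ring] at hb ⊢
  rw [wI_add k m]
  generalize wI k = w at *
  generalize (1 - w)⁻¹ = e at *
  generalize (1 + w * X ^ m * X)⁻¹ = b at *
  generalize (1 + w * X ^ m)⁻¹ = a at *
  generalize pI k m = p at *
  rw [mul_pow, pow_one, pow_succ X m, pow_succ w m]
  generalize w ^ m = u at *
  generalize (X : PowerSeries ℂ) ^ m = x at *
  generalize (X : PowerSeries ℂ) = q at *
  linear_combination u * p * (-a * b * (1 + w * q * x) * he - a * hb + (1 - w ^ 2 * x) * e * a * hb)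

theorem sI_sum (k M : ℕ) (hk : 1 ≤ k) :
    ∑ m ∈ Finset.range M, sI k m
      = 1 - cI k M + X ^ (2 * k + 1) * ∑ m ∈ Finset.range M, sI (k + 1) m := by
  have h0 : cI k 0 = 1 := by
    have he := inv_sub_wI k hk
    have ha := inv_add_wI k hk
    simp only [cI, pI, pow_zero, Finset.range_zero, Finset.prod_empty, add_zero]
    linear_combination (1 + wI k)⁻¹ * (1 + wI k) * he + ha
  have := Finset.sum_range_sub' (cI k) M
  rw [h0] at this
  rw [← this, Finset.mul_sum, ← Finset.sum_add_distrib]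
  refine Finset.sum_congr rfl fun m _ => ?_
  linear_combination sI_step k m hk

theorem X_dvd_cI (k M : ℕ) (hk : 1 ≤ k) : (X : PowerSeries ℂ) ^ M ∣ cI k M := by
  have : (X : PowerSeries ℂ) ∣ wI k := Dvd.dvd.mul_left (dvd_pow_self _ (by omega)) _
  rw [cI]
  repeat' apply Dvd.dvd.mul_right
  exact pow_dvd_pow_of_dvd this M

theorem sI_iter (M K : ℕ) :
    (X : PowerSeries ℂ) ^ (M + 1) ∣ X * ∑ m ∈ Finset.range M, sI 1 m -
      (∑ k ∈ Finset.range K, X ^ ((k + 1) ^ 2) +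
        X ^ ((K + 1) ^ 2) * ∑ m ∈ Finset.range M, sI (K + 1) m) := by
  induction K with
  | zero => simp
  | succ K ih =>
    have h := sI_sum (K + 1) M (by omega)
    have hd : (X : PowerSeries ℂ) ^ (M + 1) ∣ X ^ ((K + 1) ^ 2) * cI (K + 1) M := by
      rw [pow_succ']
      exact mul_dvd_mul (dvd_pow_self _ (by positivity)) (X_dvd_cI _ _ (by omega))
    have := dvd_add ih (dvd_neg.mpr hd)
    convert this using 1
    rw [Finset.sum_range_succ, h, show (K + 1 + 1) ^ 2 = (K + 1) ^ 2 + (2 * (K + 1) + 1) by ring, pow_add X ((K+1)^2)]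
    ring

theorem coeff_sI (n : ℕ) (hn : 1 ≤ n) :
    coeff n (X * ∑ m ∈ Finset.range n, sI 1 m) =
      (((Finset.range n).filter (fun k => (k + 1) ^ 2 = n)).card : ℂ) := by
  have h := X_pow_dvd_iff.mp (sI_iter n n) n (by omega)
  have h2 : (X : PowerSeries ℂ) ^ (n + 1) ∣ X ^ ((n + 1) ^ 2) * ∑ m ∈ Finset.range n, sI (n + 1) m :=
    Dvd.dvd.mul_right (pow_dvd_pow _ (by nlinarith)) _
  have h3 := X_pow_dvd_iff.mp h2 n (by omega)
  rw [map_sub, map_add, h3, add_zero, sub_eq_zero] at h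
  rw [h, map_sum, Finset.card_filter]
  push_cast
  refine Finset.sum_congr rfl fun k _ => ?_
  rw [coeff_X_pow]
  simp [eq_comm]

theorem ovGen_I (L : ℕ) : ovGen (Complex.I)⁻¹ L = pI 1 L := by
  induction L with
  | zero => simp [ovGen_zero, pI]
  | succ L ih =>
    have h := ovGen_succ (Complex.I)⁻¹ L
    have ha := inv_add_wI (1 + L) (by omega)
    rw [pI, Finset.prod_range_succ, ← pI, ← ih]
    have hw : (C (Complex.I)⁻¹ * X ^ (L + 1) : PowerSeries ℂ) = - wI (1 + L) := by
      rw [wI, Complex.inv_I, map_neg, add_comm L 1]; ring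
    rw [hw] at h
    linear_combination (1 + wI (1 + L))⁻¹ * h - ovGen (Complex.I)⁻¹ (L+1) * ha

theorem rank_sum_I (n : ℕ) (hn : 1 ≤ n) :
    ∑ P : Overpartition n, Complex.I ^ P.rank =
      2 * (((Finset.range n).filter (fun k => (k + 1) ^ 2 = n)).card : ℂ) := by
  rw [rank_sum n hn _ Complex.I_ne_zero, ← coeff_sI n hn, Finset.mul_sum, map_sum, Finset.mul_sum]
  refine Finset.sum_congr rfl fun L _ => ?_
  rw [← map_sub, ← PowerSeries.coeff_C_mul]
  have h2 : (2 : ℂ) * coeff n (X * sI 1 L) = coeff n (C 2 * (X * sI 1 L)) := by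
    rw [PowerSeries.coeff_C_mul]
  rw [h2]
  congr 1
  rw [ovGen_I, ovGen_I, pI, Finset.prod_range_succ, ← pI, sI]
  have ha := inv_add_wI (1 + L) (by omega)
  have h2C : (C (2 : ℂ) : PowerSeries ℂ) = 2 := map_ofNat C 2
  have hI : (C Complex.I : PowerSeries ℂ) ^ 2 = -1 := by
    rw [← map_pow, Complex.I_sq]; simp
  have hwL : wI (1 + L) = C Complex.I * X * X ^ L := by rw [wI, pow_add]; ring
  have hw1 : wI 1 = C Complex.I * X := by simp [wI]
  rw [h2C, hw1, mul_pow, map_pow]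
  rw [hwL] at ha ⊢
  generalize (1 + C Complex.I * X * X ^ L)⁻¹ = a at *
  linear_combination ((C Complex.I : PowerSeries ℂ)) ^ (L + 1) * pI 1 L * ha
    - 2 * (C Complex.I : PowerSeries ℂ) ^ L * pI 1 L * a * X * X ^ L * hI
end PartB
section PartC
open PowerSeries Finset

/-- `(q)_n` -/
noncomputable def qQ (n : ℕ) : PowerSeries ℂ := ∏ i ∈ range n, (1 - X ^ (i + 1))

/-- `(-q)_n` -/
noncomputable def qS (n : ℕ) : PowerSeries ℂ := ∏ i ∈ range n, (1 + X ^ (i + 1))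

/-- `1 / (q)_n` -/
noncomputable def qR (n : ℕ) : PowerSeries ℂ := (qQ n)⁻¹

/-- `1 / (1 - q^k)` -/
noncomputable def qe (k : ℕ) : PowerSeries ℂ := (1 - X ^ k)⁻¹

theorem qe_mul (k : ℕ) (hk : 1 ≤ k) : qe k * (1 - X ^ k) = 1 := by
  apply PowerSeries.inv_mul_cancel
  have : k ≠ 0 := by omega
  simp [this]

theorem qQ_succ (n : ℕ) : qQ (n + 1) = qQ n * (1 - X ^ (n + 1)) := by
  rw [qQ, prod_range_succ, ← qQ]

theorem qS_succ (n : ℕ) : qS (n + 1) = qS n * (1 + X ^ (n + 1)) := by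
  rw [qS, prod_range_succ, ← qS]

theorem qR_mul (n : ℕ) : qR n * qQ n = 1 := by
  apply PowerSeries.inv_mul_cancel
  simp [qQ, map_prod]

theorem qR_succ (n : ℕ) : qR (n + 1) * (1 - X ^ (n + 1)) = qR n := by
  have h1 := qR_mul n
  have h2 := qR_mul (n + 1)
  rw [qQ_succ] at h2
  linear_combination qR n * h2 - qR (n + 1) * (1 - X ^ (n + 1)) * h1

theorem qR_zero : qR 0 = 1 := by simp [qR, qQ]

/-- Gauss sum -/
noncomputable def qg (m : ℕ) : PowerSeries ℂ :=
  ∑ p ∈ antidiagonal m, (-1) ^ p.1 * qR p.1 * qR p.2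

theorem qg_aux (m : ℕ) :
    ∑ p ∈ antidiagonal (m + 1), (-1) ^ p.1 * (1 - X ^ p.1) * qR p.1 * qR p.2 = - qg m := by
  rw [Finset.Nat.sum_antidiagonal_succ, qg]
  simp only [pow_zero, sub_self, mul_zero, zero_mul, zero_add]
  rw [← sum_neg_distrib]
  refine sum_congr rfl fun p _ => ?_
  rw [← qR_succ p.1]
  ring

theorem qg_step (m : ℕ) : (1 - X ^ (m + 2)) * qg (m + 2) = qg m := by
  have h1 : (1 - X ^ (m + 2)) * qg (m + 2)
      = ∑ p ∈ antidiagonal (m + 1 + 1), (-1) ^ p.1 * (1 - X ^ p.1) * qR p.1 * qR p.2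
        + ∑ p ∈ antidiagonal (m + 1 + 1), (-1) ^ p.1 * X ^ p.1 * qR p.1 * (qR p.2 * (1 - X ^ p.2)) := by
    rw [qg, mul_sum, ← sum_add_distrib]
    refine sum_congr rfl fun p hp => ?_
    rw [HasAntidiagonal.mem_antidiagonal] at hp
    rw [show m + 2 = p.1 + p.2 by omega, pow_add]
    ring
  have h2 : ∑ p ∈ antidiagonal (m + 1 + 1),
      (-1 : PowerSeries ℂ) ^ p.1 * X ^ p.1 * qR p.1 * (qR p.2 * (1 - X ^ p.2))
      = ∑ p ∈ antidiagonal (m + 1), (-1) ^ p.1 * X ^ p.1 * qR p.1 * qR p.2 := by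
    rw [Finset.Nat.sum_antidiagonal_succ']
    simp only [pow_zero, sub_self, mul_zero, zero_add]
    refine sum_congr rfl fun p _ => ?_
    rw [qR_succ p.2]
  have h3 : ∑ p ∈ antidiagonal (m + 1), (-1) ^ p.1 * X ^ p.1 * qR p.1 * qR p.2
      = qg (m + 1) - ∑ p ∈ antidiagonal (m + 1), (-1) ^ p.1 * (1 - X ^ p.1) * qR p.1 * qR p.2 := by
    rw [qg, ← sum_sub_distrib]
    refine sum_congr rfl fun p _ => ?_
    ring
  rw [h1, h2, h3, qg_aux, qg_aux]
  ring

theorem qg_even (n : ℕ) : qg (2 * n) * qQ n * qS n = 1 := by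
  induction n with
  | zero => simp [qg, qQ, qS, qR]
  | succ n ih =>
    have h := qg_step (2 * n)
    rw [qQ_succ, qS_succ, show 2 * (n + 1) = 2 * n + 2 by ring]
    have : (X : PowerSeries ℂ) ^ (2 * n + 2) = X ^ (n + 1) * X ^ (n + 1) := by
      rw [← pow_add]; congr 1; ring
    rw [this] at h
    linear_combination ih + qQ n * qS n * h

theorem sum_symm (n : ℕ) (f : ℕ → PowerSeries ℂ) (hf : ∀ k, k ≤ 2 * n → f (2 * n - k) = f k) :
    ∑ k ∈ range (2 * n + 1), f k = f n + 2 * ∑ j ∈ range n, f (n + (j + 1)) := by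
  rw [show 2 * n + 1 = n + (n + 1) by ring, sum_range_add, sum_range_succ' (fun x => f (n + x)),
    ← sum_range_reflect]
  have : ∑ j ∈ range n, f (n - 1 - j) = ∑ j ∈ range n, f (n + (j + 1)) := by
    refine sum_congr rfl fun j hj => ?_
    rw [mem_range] at hj
    rw [← hf (n - 1 - j) (by omega)]
    congr 1
    omega
  rw [this, add_zero]
  ring

theorem qg_symm (n : ℕ) : (-1) ^ n * qg (2 * n) =
    qR n * qR n + 2 * ∑ j ∈ range n, (-1) ^ (j + 1) * (qR (n - (j + 1)) * qR (n + (j + 1))) := by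
  have hsq : ((-1 : PowerSeries ℂ) ^ n) * (-1) ^ n = 1 := by
    rw [← mul_pow]; simp
  have h := sum_symm n (fun k => (-1) ^ k * qR k * qR (2 * n - k)) (by
    intro k hk
    have : (-1 : PowerSeries ℂ) ^ (2 * n - k) = (-1) ^ k := by
      rcases Nat.even_or_odd k with h | h
      · rw [h.neg_one_pow, Even.neg_one_pow]
        rw [Nat.even_sub hk]; simp [h]
      · rw [h.neg_one_pow, Odd.neg_one_pow]
        obtain ⟨c, hc⟩ := h
        exact ⟨n - c - 1, by omega⟩
    rw [this, show 2 * n - (2 * n - k) = k by omega]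
    ring)
  have h2 : ∑ j ∈ range n, (-1) ^ (n + (j + 1)) * qR (n + (j + 1)) * qR (2 * n - (n + (j + 1)))
      = (-1) ^ n * ∑ j ∈ range n, (-1) ^ (j + 1) * (qR (n - (j + 1)) * qR (n + (j + 1))) := by
    rw [mul_sum]
    refine sum_congr rfl fun j hj => ?_
    rw [show 2 * n - (n + (j + 1)) = n - (j + 1) by omega, pow_add]
    ring
  rw [qg, Finset.Nat.sum_antidiagonal_eq_sum_range_succ_mk, Nat.succ_eq_add_one]
  dsimp only at h ⊢
  rw [h, h2, show 2 * n - n = n by omega]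
  linear_combination (qR n * qR n + 2 * ∑ j ∈ range n, (-1) ^ (j + 1) * (qR (n - (j + 1)) * qR (n + (j + 1)))) * hsq

/-- `1/(q)_{n-j}`, zero when `j > n` -/
noncomputable def qr (n j : ℕ) : PowerSeries ℂ := if j ≤ n then qR (n - j) else 0

theorem qr_succ (n j : ℕ) : qr n (j + 1) = qr n j * (1 - X ^ (n - j)) := by
  unfold qr
  rcases lt_trichotomy j n with h | h | h
  · rw [if_pos (by omega), if_pos (by omega), show n - j = n - (j + 1) + 1 by omega, qR_succ]
  · subst h; simp
  · rw [if_neg (by omega), if_neg (by omega)]; simp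

theorem qr_succ_succ (n j : ℕ) : qr (n + 1) (j + 1) = qr n j := by
  unfold qr; simp

/-- summand; index `n` stands for `n+1` -/
noncomputable def qU (n j : ℕ) : PowerSeries ℂ :=
  X ^ (n + 1) * qQ n * qQ (n + 1) * qr (n + 1) j * qR (n + 1 + j)

noncomputable def qG (N j : ℕ) : PowerSeries ℂ :=
  X ^ j * qe j * qe (j + 1) * (qQ (N + 1) * qQ N * qr N j * qR (N + j + 1))

theorem qU_step (n j : ℕ) (hj : 1 ≤ j) :
    qU n j - X ^ (2 * j + 1) * qU n (j + 1) = (1 - X ^ (2 * j + 1)) * (qG (n + 1) j - qG n j) := by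
  by_cases h : j ≤ n + 1
  · have e1 := qr_succ (n + 1) j
    have e2 := qr_succ_succ n j
    have e3 := qR_succ (n + 1 + j)
    have e4 := qQ_succ (n + 1)
    have e5 := qQ_succ n
    have f1 := qe_mul j hj
    have f2 := qe_mul (j + 1) (by omega)
    rw [qU, qU, qG, qG, show n + 1 + (j + 1) = n + 1 + j + 1 by ring, ← e2, e1, ← e3, e4,
      show n + j + 1 = n + 1 + j by ring, ← e3, e5]
    obtain ⟨d, hd⟩ := Nat.exists_eq_add_of_le h
    rw [hd, show j + d - j = d by omega]
    rw [show (X : PowerSeries ℂ) ^ (j + d + 1) = X ^ j * X ^ d * X by ring,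
      show (X : PowerSeries ℂ) ^ (j + d + j + 1) = X ^ j * X ^ d * X ^ j * X by ring,
      show (X : PowerSeries ℂ) ^ (2 * j + 1) = X ^ j * X ^ j * X by ring,
      pow_add X j d]
    rw [show (X : PowerSeries ℂ) ^ (j + 1) = X ^ j * X by ring] at f2
    generalize qe j = a at *
    generalize qe (j + 1) = b at *
    generalize qQ n = Q at *
    generalize qr (j + d) j = r at *
    generalize qR (j + d + j + 1) = R at *
    generalize (X : PowerSeries ℂ) ^ j = x at *
    generalize (X : PowerSeries ℂ) ^ d = y at *
    generalize (X : PowerSeries ℂ) = q at *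
    linear_combination (-Q ^ 2 * r * R * x * y * (1 - x * y) * (1 - x * x * q)) * (f1 * b * (1 - x * q) + f2)
  · have z1 : ∀ k, n + 1 < k → qr (n + 1) k = 0 := fun k hk => by simp [qr, hk]
    have z2 : qr n j = 0 := by rw [qr, if_neg (by omega)]
    rw [qU, qU, qG, qG, z1 _ (by omega), z1 _ (by omega), z2]
    simp

noncomputable def qGam (N j : ℕ) : PowerSeries ℂ := ∑ n ∈ range N, qU n j

theorem qGam_step (N j : ℕ) (hj : 1 ≤ j) :
    qGam N j = X ^ (2 * j + 1) * qGam N (j + 1) + (1 - X ^ (2 * j + 1)) * qG N j := by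
  have h := sum_range_sub (fun n => qG n j) N
  have h0 : qG 0 j = 0 := by
    rw [qG, qr, if_neg (by omega)]; simp
  simp only [h0, sub_zero] at h
  rw [← h, qGam, qGam, mul_sum, mul_sum, ← sum_add_distrib]
  refine sum_congr rfl fun n _ => ?_
  linear_combination qU_step n j hj

theorem qQ_dvd (k d : ℕ) : (X : PowerSeries ℂ) ^ (k + 1) ∣ qQ (k + d) - qQ k := by
  induction d with
  | zero => simp
  | succ d ih =>
    rw [← add_assoc, qQ_succ]
    have h : (X : PowerSeries ℂ) ^ (k + 1) ∣ qQ (k + d) * X ^ (k + d + 1) :=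
      Dvd.dvd.mul_left (pow_dvd_pow _ (by omega)) _
    convert dvd_sub ih h using 1
    ring

theorem qG_dvd (N j : ℕ) (hj : j ≤ N) :
    (X : PowerSeries ℂ) ^ (N + 1) ∣ qG N j - X ^ j * qe j * qe (j + 1) := by
  have h1 := qQ_dvd (N + 1) j
  have h2 := qQ_dvd (N - j) j
  rw [Nat.sub_add_cancel hj] at h2
  have e1 := qR_mul (N + j + 1)
  have e2 := qR_mul (N - j)
  rw [show N + 1 + j = N + j + 1 by ring] at h1
  have h1' : (X : PowerSeries ℂ) ^ (N - j + 1) ∣ qQ (N + j + 1) - qQ (N + 1) :=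
    (pow_dvd_pow _ (by omega)).trans h1
  have h3 : (X : PowerSeries ℂ) ^ (N - j + 1) ∣
      qQ (N + 1) * qQ N * qR (N - j) * qR (N + j + 1) - 1 := by
    convert dvd_sub (Dvd.dvd.mul_left h2 (qQ (N + 1) * qR (N - j) * qR (N + j + 1)))
      (Dvd.dvd.mul_left h1' (qR (N + j + 1))) using 1
    linear_combination qQ (N + 1) * qR (N + j + 1) * e2 + e1
  have h4 := mul_dvd_mul (Dvd.intro (qe j * qe (j + 1)) rfl :
    (X : PowerSeries ℂ) ^ j ∣ X ^ j * (qe j * qe (j + 1))) h3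
  rw [← pow_add, show j + (N - j + 1) = N + 1 by omega] at h4
  convert h4 using 1
  rw [qG, qr, if_pos hj]
  ring

noncomputable def qL (M j : ℕ) : PowerSeries ℂ :=
  ∑ x ∈ range (M + 1), ∑ z ∈ range M, X ^ (x * (z + 1) + j * (x + z + 1))

theorem qL_step (M j : ℕ) : qL (M + 1) j = X ^ (2 * j + 1) * qL M (j + 1)
    + ∑ z ∈ range (M + 1), X ^ (j * (z + 1))
    + ∑ x ∈ range (M + 1), X ^ (2 * j + 1) * X ^ ((j + 1) * x) := by
  rw [qL, sum_range_succ', qL, mul_sum]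
  have h : ∀ x ∈ range (M + 1), ∑ z ∈ range (M + 1),
      (X : PowerSeries ℂ) ^ ((x + 1) * (z + 1) + j * (x + 1 + z + 1))
      = X ^ (2 * j + 1) * ∑ z ∈ range M, X ^ (x * (z + 1) + (j + 1) * (x + z + 1))
        + X ^ (2 * j + 1) * X ^ ((j + 1) * x) := by
    intro x _
    rw [sum_range_succ', mul_sum]
    congr 1
    · refine sum_congr rfl fun z _ => ?_
      rw [← pow_add]; congr 1; ring
    · rw [← pow_add]; congr 1; ring
  rw [sum_congr rfl h, sum_add_distrib]
  simp only [zero_mul, zero_add]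
  ring

theorem geo_dvd (K k N : ℕ) (hk : 1 ≤ k) (hK : N + 1 ≤ K) :
    (X : PowerSeries ℂ) ^ (N + 1) ∣ ∑ z ∈ range K, X ^ (k * z) - qe k := by
  have h := geom_sum_mul_neg ((X : PowerSeries ℂ) ^ k) K
  simp only [← pow_mul] at h
  have h2 : (X : PowerSeries ℂ) ^ (N + 1) ∣ X ^ (k * K) := pow_dvd_pow _ (by nlinarith)
  convert Dvd.dvd.mul_right h2 (- qe k) using 1
  linear_combination qe k * h - (∑ z ∈ range K, (X : PowerSeries ℂ) ^ (k * z)) * qe_mul k hk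

theorem qGam_dvd (N d : ℕ) : ∀ j M, 1 ≤ j → j + d = N + 1 → N ≤ M →
    (X : PowerSeries ℂ) ^ (N + 1) ∣ qGam N j - qL (M + d) j := by
  induction d with
  | zero =>
    intro j M hj hd hM
    apply dvd_sub
    · refine dvd_sum fun n hn => ?_
      rw [mem_range] at hn
      rw [qU, qr, if_neg (by omega)]; simp
    · refine dvd_sum fun x _ => dvd_sum fun z _ => pow_dvd_pow _ ?_
      nlinarith [Nat.zero_le (x * (z+1)), Nat.zero_le (j * (x + z))]
  | succ d ih =>
    intro j M hj hd hM
    have i1 := ih (j + 1) M (by omega) (by omega) hM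
    have i2 := qG_dvd N j (by omega)
    have i3 := geo_dvd (M + d + 1) j N hj (by omega)
    have i4 := geo_dvd (M + d + 1) (j + 1) N (by omega) (by omega)
    have f1 := qe_mul j hj
    have f2 := qe_mul (j + 1) (by omega)
    rw [← add_assoc, qL_step, qGam_step N j hj]
    have s1 : ∑ z ∈ range (M + d + 1), (X : PowerSeries ℂ) ^ (j * (z + 1))
        = X ^ j * ∑ z ∈ range (M + d + 1), X ^ (j * z) := by
      rw [mul_sum]
      refine sum_congr rfl fun z _ => ?_
      rw [← pow_add]; congr 1; ring
    rw [s1, ← mul_sum]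
    have := dvd_sub (dvd_sub (dvd_add (Dvd.dvd.mul_left i1 (X ^ (2 * j + 1)))
      (Dvd.dvd.mul_left i2 (1 - X ^ (2 * j + 1)))) (Dvd.dvd.mul_left i3 (X ^ j)))
      (Dvd.dvd.mul_left i4 (X ^ (2 * j + 1)))
    convert this using 1
    rw [show (X : PowerSeries ℂ) ^ (2 * j + 1) = X ^ j * X ^ j * X by ring]
    rw [show (X : PowerSeries ℂ) ^ (j + 1) = X ^ j * X by ring] at f2
    generalize (∑ z ∈ range (M + d + 1), (X : PowerSeries ℂ) ^ (j * z)) = S1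
    generalize (∑ z ∈ range (M + d + 1), (X : PowerSeries ℂ) ^ ((j + 1) * z)) = S2
    generalize qe j = a at *
    generalize qe (j + 1) = b at *
    generalize (X : PowerSeries ℂ) ^ j = x at *
    generalize (X : PowerSeries ℂ) = q at *
    linear_combination x * a * f2 + x * x * q * b * f1
end PartC
section PartD
open PowerSeries Finset

/-- indicator of `(j+1)(z+1) = N` -/
def indD (N j z : ℕ) : ℤ := if (j + 1) * (z + 1) = N then 1 else 0

/-- indicator of `ab + bc + ca = N` with `a = j+1`, etc. -/
def indT (N j x z : ℕ) : ℤ :=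
  if (x + 1) * (z + 1) + (j + 1) * (x + 1 + (z + 1)) = N then 1 else 0

theorem ovGen_neg (L : ℕ) : ovGen (-1 : ℂ)⁻¹ L * qS L = qQ L := by
  induction L with
  | zero => simp [ovGen_zero, qS, qQ]
  | succ L ih =>
    have h := ovGen_succ (-1 : ℂ)⁻¹ L
    have hw : (C (-1 : ℂ)⁻¹ : PowerSeries ℂ) = -1 := by
      rw [inv_neg_one]; simp
    rw [hw] at h
    rw [qS_succ, qQ_succ]
    linear_combination qS L * h + (1 - X ^ (L + 1)) * ih

theorem ovGen_neg_diff (N L : ℕ) (hL : L < N) :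
    (-1) ^ (L + 1) * (ovGen (-1 : ℂ)⁻¹ (L + 1) - ovGen (-1 : ℂ)⁻¹ L)
      = -2 * (X ^ (L + 1) * qe (L + 1)
        + 2 * ∑ j ∈ range N, (-1) ^ (j + 1) * qU L (j + 1)) := by
  have h1 := ovGen_neg (L + 1)
  have h2 := ovGen_neg L
  have hg := qg_even (L + 1)
  have hs := qg_symm (L + 1)
  have hr := qR_mul L
  have hr1 := qR_mul (L + 1)
  have he := qe_mul (L + 1) (by omega)
  have hR := qR_succ L
  have hU : ∑ j ∈ range N, (-1) ^ (j + 1) * qU L (j + 1)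
      = X ^ (L + 1) * qQ L * qQ (L + 1) *
        ∑ j ∈ range (L + 1), (-1) ^ (j + 1) * (qR (L + 1 - (j + 1)) * qR (L + 1 + (j + 1))) := by
    rw [mul_sum, ← sum_subset (range_mono (show L + 1 ≤ N by omega))]
    · refine sum_congr rfl fun j hj => ?_
      rw [mem_range] at hj
      rw [qU, qr, if_pos (by omega)]
      ring
    · intro j _ hj
      rw [mem_range] at hj
      rw [qU, qr, if_neg (by omega)]
      simp
  rw [hU]
  generalize (∑ j ∈ range (L + 1), (-1) ^ (j + 1) * (qR (L + 1 - (j + 1)) * qR (L + 1 + (j + 1)))) = Z at *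
  have d1 : ovGen (-1 : ℂ)⁻¹ (L + 1) = qQ (L + 1) * qQ (L + 1) * qg (2 * (L + 1)) := by
    linear_combination qg (2 * (L + 1)) * qQ (L + 1) * h1 - ovGen (-1 : ℂ)⁻¹ (L + 1) * hg
  have d2 : ovGen (-1 : ℂ)⁻¹ L = qQ L * (1 + X ^ (L + 1)) * qQ (L + 1) * qg (2 * (L + 1)) := by
    rw [qS_succ] at hg
    linear_combination (1 + X ^ (L + 1)) * qg (2 * (L + 1)) * qQ (L + 1) * h2 - ovGen (-1 : ℂ)⁻¹ L * hg
  have d3 : qe (L + 1) = qQ L * qQ (L + 1) * (qR (L + 1) * qR (L + 1)) := by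
    rw [qQ_succ] at hr1 ⊢
    linear_combination (- qe (L + 1)) * hr1 + qQ L * qR (L + 1) * he - qQ L * qR (L + 1) * hr1
  rw [d1, d2, d3]
  have hq := qQ_succ L
  generalize (-1 : PowerSeries ℂ) ^ (L + 1) = s at *
  linear_combination (-2 * X ^ (L + 1) * qQ L * qQ (L + 1)) * hs + s * qQ (L + 1) * qg (2 * (L + 1)) * hq

theorem coeff_X_pow_int (n m : ℕ) (p : Prop) [Decidable p] (h : p ↔ m = n) :
    coeff n ((X : PowerSeries ℂ) ^ m) = ((if p then 1 else 0 : ℤ) : ℂ) := by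
  rw [coeff_X_pow]
  by_cases hm : m = n
  · rw [if_pos hm.symm, if_pos (h.mpr hm)]; simp
  · rw [if_neg (fun h' => hm h'.symm), if_neg (fun h' => hm (h.mp h'))]; simp

theorem coeff_qe (N k : ℕ) (hN : 1 ≤ N) :
    coeff N (X ^ (k + 1) * qe (k + 1)) = ((∑ z ∈ range (2 * N), indD N k z : ℤ) : ℂ) := by
  have h := geo_dvd (2 * N) (k + 1) N (by omega) (by omega)
  have h2 := X_pow_dvd_iff.mp (Dvd.dvd.mul_left h (X ^ (k + 1))) N (by omega)
  rw [mul_sub, map_sub, sub_eq_zero] at h2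
  rw [← h2, mul_sum, map_sum]
  push_cast
  refine sum_congr rfl fun z _ => ?_
  rw [← pow_add, indD]
  apply coeff_X_pow_int
  rw [show k + 1 + (k + 1) * z = (k + 1) * (z + 1) by ring]

theorem coeff_qGam (N j : ℕ) (hj : j < N) :
    coeff N (qGam N (j + 1)) = ((∑ z ∈ range (2 * N), indD N j z
      + ∑ x ∈ range (2 * N), ∑ z ∈ range (2 * N), indT N j x z : ℤ) : ℂ) := by
  have h := qGam_dvd N (N - j) (j + 1) (N + j) (by omega) (by omega) (by omega)
  rw [show N + j + (N - j) = 2 * N by omega] at h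
  have h2 := X_pow_dvd_iff.mp h N (by omega)
  rw [map_sub, sub_eq_zero] at h2
  rw [h2, qL, sum_range_succ', map_add, map_sum, map_sum, add_comm]
  push_cast
  congr 1
  · refine sum_congr rfl fun z _ => ?_
    rw [indD]
    apply coeff_X_pow_int
    simp
  · refine sum_congr rfl fun x _ => ?_
    rw [map_sum]
    refine sum_congr rfl fun z _ => ?_
    rw [indT]
    apply coeff_X_pow_int
    rw [show x + 1 + z + 1 = x + 1 + (z + 1) by ring]

/-- the (signed) counting function -/
def cntE (N : ℕ) : ℤ := ∑ j ∈ range N, ((1 + 2 * (-1) ^ (j + 1)) * ∑ z ∈ range (2 * N), indD N j z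
  + 2 * (-1) ^ (j + 1) * ∑ x ∈ range (2 * N), ∑ z ∈ range (2 * N), indT N j x z)

theorem rank_sum_neg (n : ℕ) (hn : 1 ≤ n) :
    ∑ P : Overpartition n, (-1 : ℂ) ^ P.rank = ((-2 * cntE n : ℤ) : ℂ) := by
  rw [rank_sum n hn _ (by norm_num)]
  have h : ∀ L ∈ range n, (-1 : ℂ) ^ (L + 1) *
      (coeff n (ovGen (-1 : ℂ)⁻¹ (L + 1)) - coeff n (ovGen (-1 : ℂ)⁻¹ L))
      = coeff n (C (-2 : ℂ) * (X ^ (L + 1) * qe (L + 1)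
        + C (2 : ℂ) * ∑ j ∈ range n, C ((-1 : ℂ) ^ (j + 1)) * qU L (j + 1))) := by
    intro L hL
    have h := ovGen_neg_diff n L (mem_range.mp hL)
    have c1 : (C (-2 : ℂ) : PowerSeries ℂ) = -2 := by rw [map_neg, map_ofNat]
    have c2 : (C (2 : ℂ) : PowerSeries ℂ) = 2 := map_ofNat C 2
    have c3 : ∀ k, (C ((-1 : ℂ) ^ k) : PowerSeries ℂ) = (-1) ^ k := fun k => by simp
    simp only [c1, c2, c3]
    rw [← h, ← map_sub, ← PowerSeries.coeff_C_mul, c3]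
  rw [sum_congr rfl h]
  simp only [PowerSeries.coeff_C_mul, map_add, map_sum]
  rw [← mul_sum, sum_add_distrib, ← mul_sum, sum_comm]
  have h3 : ∀ j ∈ range n, ∑ L ∈ range n, (-1 : ℂ) ^ (j + 1) * coeff n (qU L (j + 1))
      = (-1 : ℂ) ^ (j + 1) * ((∑ z ∈ range (2 * n), indD n j z
      + ∑ x ∈ range (2 * n), ∑ z ∈ range (2 * n), indT n j x z : ℤ) : ℂ) := by
    intro j hj
    rw [← coeff_qGam n j (mem_range.mp hj), qGam, map_sum, mul_sum]
  rw [sum_congr rfl h3, sum_congr rfl (fun k _ => coeff_qe n k hn), mul_sum, ← sum_add_distrib, cntE]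
  push_cast
  congr 1
  refine sum_congr rfl fun j _ => ?_
  ring

theorem indD_nonneg (N j z : ℕ) : 0 ≤ indD N j z := by unfold indD; split_ifs <;> simp
theorem indT_nonneg (N j x z : ℕ) : 0 ≤ indT N j x z := by unfold indT; split_ifs <;> simp

/-- sign -/
def sg (j : ℕ) : ℤ := (-1) ^ (j + 1)

theorem sg_even {j : ℕ} (h : Even (j + 1)) : sg j = 1 := h.neg_one_pow
theorem sg_odd {j : ℕ} (h : Odd (j + 1)) : sg j = -1 := h.neg_one_pow
theorem sg_cases (j : ℕ) : (Even (j + 1) ∧ sg j = 1) ∨ (¬ Even (j + 1) ∧ sg j = -1) := by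
  rcases Nat.even_or_odd (j + 1) with h | h
  · exact Or.inl ⟨h, sg_even h⟩
  · exact Or.inr ⟨Nat.not_even_iff_odd.mpr h, sg_odd h⟩

theorem cntE_eq (N : ℕ) (hN : 1 ≤ N) : 6 * cntE N =
    6 * ∑ j ∈ range (2 * N), ∑ z ∈ range (2 * N), (1 + sg j + sg z) * indD N j z
    + 4 * ∑ j ∈ range (2 * N), ∑ x ∈ range (2 * N), ∑ z ∈ range (2 * N),
      (sg j + sg x + sg z) * indT N j x z := by
  have h1 : cntE N = ∑ j ∈ range (2 * N), ∑ z ∈ range (2 * N), (1 + 2 * sg j) * indD N j z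
    + 2 * ∑ j ∈ range (2 * N), ∑ x ∈ range (2 * N), ∑ z ∈ range (2 * N), sg j * indT N j x z := by
    rw [cntE, mul_sum, ← sum_add_distrib, ← sum_subset (range_mono (show N ≤ 2 * N by omega))]
    · refine sum_congr rfl fun j _ => ?_
      simp only [mul_sum, sg, mul_assoc]
    · intro j _ hj
      rw [mem_range] at hj
      have a1 : ∀ z, indD N j z = 0 := fun z => by
        rw [indD, if_neg]; intro h; nlinarith [Nat.zero_le (j * z)]
      have a2 : ∀ x z, indT N j x z = 0 := fun x z => by
        rw [indT, if_neg]; intro h; nlinarith [Nat.zero_le ((x+1) * (z+1)), Nat.zero_le (j * (x + z))]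
      simp [a1, a2]
  have hD : ∀ j z, indD N j z = indD N z j := fun j z => by
    unfold indD; rw [mul_comm]
  have hT1 : ∀ j x z, indT N j x z = indT N x j z := fun j x z => by
    unfold indT
    rw [show (x + 1) * (z + 1) + (j + 1) * (x + 1 + (z + 1))
      = (j + 1) * (z + 1) + (x + 1) * (j + 1 + (z + 1)) by ring]
  have hT2 : ∀ j x z, indT N j x z = indT N j z x := fun j x z => by
    unfold indT
    rw [show (x + 1) * (z + 1) + (j + 1) * (x + 1 + (z + 1))
      = (z + 1) * (x + 1) + (j + 1) * (z + 1 + (x + 1)) by ring]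
  have h2 : ∑ j ∈ range (2 * N), ∑ z ∈ range (2 * N), sg z * indD N j z
      = ∑ j ∈ range (2 * N), ∑ z ∈ range (2 * N), sg j * indD N j z := by
    rw [sum_comm]
    exact sum_congr rfl fun j _ => sum_congr rfl fun z _ => by rw [hD]
  have h3 : ∑ j ∈ range (2 * N), ∑ x ∈ range (2 * N), ∑ z ∈ range (2 * N), sg x * indT N j x z
      = ∑ j ∈ range (2 * N), ∑ x ∈ range (2 * N), ∑ z ∈ range (2 * N), sg j * indT N j x z := by
    rw [sum_comm]
    exact sum_congr rfl fun j _ => sum_congr rfl fun x _ => sum_congr rfl fun z _ => by rw [hT1]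
  have h4 : ∑ j ∈ range (2 * N), ∑ x ∈ range (2 * N), ∑ z ∈ range (2 * N), sg z * indT N j x z
      = ∑ j ∈ range (2 * N), ∑ x ∈ range (2 * N), ∑ z ∈ range (2 * N), sg x * indT N j x z := by
    refine sum_congr rfl fun j _ => ?_
    rw [sum_comm]
    exact sum_congr rfl fun x _ => sum_congr rfl fun z _ => by rw [hT2]
  rw [h3] at h4
  simp only [add_mul, sum_add_distrib, one_mul, mul_assoc, ← mul_sum] at h1 h2 h3 h4 ⊢
  linarith

theorem cntE_odd (N : ℕ) (hN : 1 ≤ N) (ho : Odd N) : cntE N ≤ -1 := by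
  have h := cntE_eq N hN
  have hT : ∑ j ∈ range (2 * N), ∑ x ∈ range (2 * N), ∑ z ∈ range (2 * N),
      (sg j + sg x + sg z) * indT N j x z ≤ 0 := by
    refine sum_nonpos fun j _ => sum_nonpos fun x _ => sum_nonpos fun z _ => ?_
    unfold indT
    split_ifs with hc
    · rw [← hc, ← Nat.not_even_iff_odd] at ho
      rcases sg_cases j with ⟨a, b⟩ | ⟨a, b⟩ <;> rcases sg_cases x with ⟨a', b'⟩ | ⟨a', b'⟩ <;>
        rcases sg_cases z with ⟨a2, b2⟩ | ⟨a2, b2⟩ <;> rw [b, b', b2] <;>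
        simp only [Nat.even_add (m := (x + 1) * (z + 1)), Nat.even_mul,
          Nat.even_add (m := x + 1) (n := z + 1), a, a', a2] at ho <;> first | (simp at ho; done) | norm_num
    · simp
  have hD : ∑ j ∈ range (2 * N), ∑ z ∈ range (2 * N), (1 + sg j + sg z) * indD N j z ≤ -1 := by
    have e : ∀ j z, (1 + sg j + sg z) * indD N j z = - indD N j z := by
      intro j z
      unfold indD
      split_ifs with hc
      · rw [← hc, Nat.odd_mul] at ho
        rw [sg_odd ho.1, sg_odd ho.2]; norm_num
      · simp
    simp only [e, sum_neg_distrib]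
    have : (1 : ℤ) ≤ ∑ j ∈ range (2 * N), ∑ z ∈ range (2 * N), indD N j z := by
      have a := single_le_sum (f := fun j => ∑ z ∈ range (2 * N), indD N j z)
        (fun j _ => sum_nonneg fun z _ => indD_nonneg N j z) (mem_range.mpr (show 0 < 2 * N by omega))
      have b := single_le_sum (f := fun z => indD N 0 z)
        (fun z _ => indD_nonneg N 0 z) (mem_range.mpr (show N - 1 < 2 * N by omega))
      have c : indD N 0 (N - 1) = 1 := by rw [indD, if_pos]; omega
      linarith
    linarith
  linarith

theorem cntE_even (N : ℕ) (hN : 1 ≤ N) (he : Even N) : 2 ≤ cntE N := by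
  have h := cntE_eq N hN
  have hT : 0 ≤ ∑ j ∈ range (2 * N), ∑ x ∈ range (2 * N), ∑ z ∈ range (2 * N),
      (sg j + sg x + sg z) * indT N j x z := by
    refine sum_nonneg fun j _ => sum_nonneg fun x _ => sum_nonneg fun z _ => ?_
    unfold indT
    split_ifs with hc
    · rw [← hc] at he
      rcases sg_cases j with ⟨a, b⟩ | ⟨a, b⟩ <;> rcases sg_cases x with ⟨a', b'⟩ | ⟨a', b'⟩ <;>
        rcases sg_cases z with ⟨a2, b2⟩ | ⟨a2, b2⟩ <;> rw [b, b', b2] <;>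
        simp only [Nat.even_add (m := (x + 1) * (z + 1)), Nat.even_mul,
          Nat.even_add (m := x + 1) (n := z + 1), a, a', a2] at he <;> first | (simp at he; done) | norm_num
    · simp
  have hN2 : 2 ≤ N := by obtain ⟨c, hc⟩ := he; omega
  have hD : 2 ≤ ∑ j ∈ range (2 * N), ∑ z ∈ range (2 * N), (1 + sg j + sg z) * indD N j z := by
    have e : ∀ j z, indD N j z ≤ (1 + sg j + sg z) * indD N j z := by
      intro j z
      unfold indD
      split_ifs with hc
      · rw [← hc, Nat.even_mul] at he
        rcases sg_cases j with ⟨a, b⟩ | ⟨a, b⟩ <;> rcases sg_cases z with ⟨a', b'⟩ | ⟨a', b'⟩ <;>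
          rw [b, b'] <;> simp only [a, a'] at he <;> first | (simp at he; done) | norm_num
      · simp
    have hle := sum_le_sum (fun j (_ : j ∈ range (2 * N)) => sum_le_sum (fun z (_ : z ∈ range (2 * N)) => e j z))
    have a := sum_le_sum_of_subset_of_nonneg (s := {0, N - 1}) (t := range (2 * N))
        (f := fun j => ∑ z ∈ range (2 * N), indD N j z)
        (by intro j hj; rw [mem_insert, mem_singleton] at hj; rw [mem_range]; omega)
        (fun j _ _ => sum_nonneg fun z _ => indD_nonneg N j z)
    rw [sum_pair (by omega)] at a
    have b := single_le_sum (f := fun z => indD N 0 z)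
        (fun z _ => indD_nonneg N 0 z) (mem_range.mpr (show N - 1 < 2 * N by omega))
    have b' := single_le_sum (f := fun z => indD N (N - 1) z)
        (fun z _ => indD_nonneg N (N - 1) z) (mem_range.mpr (show 0 < 2 * N by omega))
    have c : indD N 0 (N - 1) = 1 := by rw [indD, if_pos]; omega
    have c' : indD N (N - 1) 0 = 1 := by rw [indD, if_pos]; omega
    linarith
  linarith

theorem nbar_eq (a : ℤ) (n : ℕ) : (nbar a 4 n : ℤ) =
    ∑ P : Overpartition n, if P.rank % 4 = a % 4 then (1 : ℤ) else 0 := by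
  classical
  rw [nbar, Nat.card_eq_fintype_card, Fintype.card_subtype, card_filter]
  push_cast
  refine sum_congr rfl fun P _ => ?_
  simp only [Int.ModEq]
  congr

theorem zpow_split (z : ℂ) (hz : z ^ 4 = 1) (hz0 : z ≠ 0) (r : ℤ) :
    z ^ r = ((if r % 4 = 0 then (1 : ℤ) else 0 : ℤ) : ℂ) + z * ((if r % 4 = 1 then (1 : ℤ) else 0 : ℤ) : ℂ)
      + z ^ 2 * ((if r % 4 = 2 then (1 : ℤ) else 0 : ℤ) : ℂ)
      + z ^ 3 * ((if r % 4 = 3 then (1 : ℤ) else 0 : ℤ) : ℂ) := by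
  have h4 : z ^ (4 : ℤ) = 1 := by exact_mod_cast hz
  have h : z ^ r = z ^ (r % 4) := by
    conv_lhs => rw [← Int.emod_add_mul_ediv r 4]
    rw [zpow_add₀ hz0, zpow_mul, h4, one_zpow, mul_one]
  have hr : r % 4 = 0 ∨ r % 4 = 1 ∨ r % 4 = 2 ∨ r % 4 = 3 := by omega
  rw [h]
  rcases hr with h | h | h | h <;> rw [h] <;> simp

theorem sum_split (z : ℂ) (hz : z ^ 4 = 1) (hz0 : z ≠ 0) (n : ℕ) :
    ∑ P : Overpartition n, z ^ P.rank = ((nbar 0 4 n : ℤ) : ℂ) + z * ((nbar 1 4 n : ℤ) : ℂ)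
      + z ^ 2 * ((nbar 2 4 n : ℤ) : ℂ) + z ^ 3 * ((nbar 3 4 n : ℤ) : ℂ) := by
  simp only [nbar_eq, Int.cast_sum, mul_sum, ← sum_add_distrib]
  refine sum_congr rfl fun P _ => ?_
  rw [zpow_split z hz hz0]
  norm_num

theorem diff_eq (n : ℕ) (hn : 1 ≤ n) : ∃ s : ℤ, 0 ≤ s ∧ s ≤ 1 ∧
    (nbar 0 4 n : ℤ) - nbar 1 4 n = s - cntE n := by
  refine ⟨(((range n).filter (fun k => (k + 1) ^ 2 = n)).card : ℤ), by positivity, ?_, ?_⟩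
  · have : ((range n).filter (fun k => (k + 1) ^ 2 = n)).card ≤ 1 := by
      rw [card_le_one]
      intro a ha b hb
      rw [mem_filter] at ha hb
      have := ha.2.trans hb.2.symm
      have := Nat.pow_left_injective (n := 2) (by norm_num) this
      omega
    exact_mod_cast this
  · have h1 := rank_sum_I n hn
    have h2 := rank_sum_neg n hn
    rw [sum_split _ Complex.I_pow_four Complex.I_ne_zero, Complex.I_sq, Complex.I_pow_three] at h1
    rw [sum_split _ (by norm_num) (by norm_num)] at h2
    have r1 := congrArg Complex.re h1
    have r2 := congrArg Complex.im h1
    simp at r1 r2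
    have h2' : ((nbar 0 4 n : ℤ) : ℤ) - nbar 1 4 n + nbar 2 4 n - nbar 3 4 n = -2 * cntE n := by
      have : (((nbar 0 4 n : ℤ) - nbar 1 4 n + nbar 2 4 n - nbar 3 4 n : ℤ) : ℂ)
        = ((-2 * cntE n : ℤ) : ℂ) := by
        rw [← h2]; push_cast; ring
      exact_mod_cast this
    have r1' : ((nbar 0 4 n : ℤ) - nbar 2 4 n : ℤ)
        = 2 * (((range n).filter (fun k => (k + 1) ^ 2 = n)).card : ℤ) := by
      have : (((nbar 0 4 n : ℤ) - nbar 2 4 n : ℤ) : ℝ)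
        = ((2 * (((range n).filter (fun k => (k + 1) ^ 2 = n)).card : ℤ) : ℤ) : ℝ) := by
        push_cast; linarith
      exact_mod_cast this
    have r2' : (nbar 1 4 n : ℤ) = nbar 3 4 n := by
      have : ((nbar 1 4 n : ℤ) : ℝ) = ((nbar 3 4 n : ℤ) : ℝ) := by push_cast; linarith
      exact_mod_cast this
    linarith
end PartD

theorem stmt10 (n : ℕ) (hn : 1 ≤ n) :
    (Odd n → nbar 1 4 n < nbar 0 4 n) ∧ (Even n → nbar 0 4 n < nbar 1 4 n) := by
  obtain ⟨s, hs0, hs1, hs⟩ := diff_eq n hn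
  constructor
  · intro h
    have := cntE_odd n hn h
    omega
  · intro h
    have := cntE_even n hn h
    omega
end

section
/- For every odd integer n ≥ 3 one has N̄(1,4,n) < N̄(2,4,n), and for every even integer n ≥ 2 one has N̄(1,4,n) > N̄(2,4,n). -/
section framework

variable {K : Type*} [Field K]

/-- The local setting: `O` is a subring of the field `K` and `1 + q u` is a unit of `O`. -/
structure Loc (O : Subring K) (q : K) : Prop where
  mem : q ∈ O
  ne : q ≠ 0
  inv : ∀ u ∈ O, 1 + q * u ≠ 0 ∧ (1 + q * u)⁻¹ ∈ O

/-- `q ^ N * O`. -/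
def II (O : Subring K) (q : K) (N : ℕ) : AddSubgroup K :=
  O.toAddSubgroup.map (AddMonoidHom.mulLeft (q ^ N))

variable {O : Subring K} {q : K}

theorem II_iff {N : ℕ} {a : K} : a ∈ II O q N ↔ ∃ c ∈ O, q ^ N * c = a := by
  simp [II, AddSubgroup.mem_map]

theorem II_zero {a : K} : a ∈ II O q 0 ↔ a ∈ O := by
  simp [II_iff]

theorem II_mul {m n : ℕ} {a b : K} (ha : a ∈ II O q m) (hb : b ∈ II O q n) :
    a * b ∈ II O q (m + n) := by
  rw [II_iff] at *
  obtain ⟨c, hc, rfl⟩ := ha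
  obtain ⟨d, hd, rfl⟩ := hb
  exact ⟨c * d, O.mul_mem hc hd, by ring⟩

theorem II_mul_O {m : ℕ} {a b : K} (ha : a ∈ II O q m) (hb : b ∈ O) :
    a * b ∈ II O q m := II_mul ha (II_zero.2 hb)

theorem II_O_mul {m : ℕ} {a b : K} (hb : b ∈ O) (ha : a ∈ II O q m) :
    b * a ∈ II O q m := by
  rw [mul_comm]; exact II_mul_O ha hb

theorem Loc.mono (h : Loc O q) {m n : ℕ} (hmn : m ≤ n) {a : K} (ha : a ∈ II O q n) :
    a ∈ II O q m := by
  rw [II_iff] at *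
  obtain ⟨c, hc, rfl⟩ := ha
  obtain ⟨k, rfl⟩ := Nat.exists_eq_add_of_le hmn
  exact ⟨q ^ k * c, O.mul_mem (O.pow_mem h.mem _) hc, by ring⟩

theorem Loc.toO (h : Loc O q) {n : ℕ} {a : K} (ha : a ∈ II O q n) : a ∈ O :=
  II_zero.1 (h.mono (Nat.zero_le n) ha)

theorem pow_II (n : ℕ) : q ^ n ∈ II O q n := II_iff.2 ⟨1, O.one_mem, by simp⟩

theorem Loc.pow_mem (h : Loc O q) {m n : ℕ} (hmn : m ≤ n) : q ^ n ∈ II O q m :=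
  h.mono hmn (pow_II n)

theorem Loc.one_add (h : Loc O q) {y : K} (hy : y ∈ II O q 1) :
    1 + y ≠ 0 ∧ (1 + y)⁻¹ ∈ O := by
  obtain ⟨c, hc, rfl⟩ := II_iff.1 hy
  simpa using h.inv c hc

theorem Loc.one_sub (h : Loc O q) {y : K} (hy : y ∈ II O q 1) :
    1 - y ≠ 0 ∧ (1 - y)⁻¹ ∈ O := by
  rw [sub_eq_add_neg]
  exact h.one_add ((II O q 1).neg_mem hy)

theorem Loc.one_add_pow (h : Loc O q) (n : ℕ) : 1 + q ^ (n + 1) ≠ 0 ∧ (1 + q ^ (n + 1))⁻¹ ∈ O :=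
  h.one_add (h.pow_mem (by omega))

theorem Loc.one_sub_pow (h : Loc O q) (n : ℕ) : 1 - q ^ (n + 1) ≠ 0 ∧ (1 - q ^ (n + 1))⁻¹ ∈ O :=
  h.one_sub (h.pow_mem (by omega))

theorem II_negq (N : ℕ) : II O (-q) N = II O q N := by
  ext a
  rw [II_iff, II_iff]
  rcases neg_one_pow_eq_or K N with h | h
  · have : (-q) ^ N = q ^ N := by rw [neg_pow, h, one_mul]
    rw [this]
  · have : (-q) ^ N = - q ^ N := by rw [neg_pow, h]; ring
    rw [this]
    constructor
    · rintro ⟨c, hc, rfl⟩; exact ⟨-c, O.neg_mem hc, by ring⟩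
    · rintro ⟨c, hc, rfl⟩; exact ⟨-c, O.neg_mem hc, by ring⟩

theorem Loc.neg (h : Loc O q) : Loc O (-q) where
  mem := O.neg_mem h.mem
  ne := neg_ne_zero.2 h.ne
  inv := fun u hu => by
    have := h.inv (-u) (O.neg_mem hu)
    rwa [show 1 + q * -u = 1 + -q * u by ring] at this

/-- Congruence modulo `q ^ N`. -/
def Cg (O : Subring K) (q : K) (N : ℕ) (a b : K) : Prop := a - b ∈ II O q N

variable {N : ℕ} {a b c d : K}

theorem Cg.refl (a : K) : Cg O q N a a := by
  unfold Cg; rw [sub_self]; exact (II O q N).zero_mem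

theorem Cg.of_eq (h : a = b) : Cg O q N a b := h ▸ Cg.refl a

theorem Cg.symm (h : Cg O q N a b) : Cg O q N b a := by
  unfold Cg at *; rw [← neg_sub]; exact (II O q N).neg_mem h

theorem Cg.trans (h : Cg O q N a b) (h' : Cg O q N b c) : Cg O q N a c := by
  unfold Cg at *; rw [← sub_add_sub_cancel a b c]; exact (II O q N).add_mem h h'

theorem Cg.add (h : Cg O q N a b) (h' : Cg O q N c d) : Cg O q N (a + c) (b + d) := by
  unfold Cg at *; rw [add_sub_add_comm]; exact (II O q N).add_mem h h'

theorem Cg.neg (h : Cg O q N a b) : Cg O q N (-a) (-b) := by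
  unfold Cg at *; rw [neg_sub_neg, ← neg_sub]; exact (II O q N).neg_mem h

theorem Cg.sub (h : Cg O q N a b) (h' : Cg O q N c d) : Cg O q N (a - c) (b - d) := by
  rw [sub_eq_add_neg, sub_eq_add_neg]; exact h.add h'.neg

theorem Cg.sum {ι : Type*} {s : Finset ι} {f g : ι → K} (h : ∀ i ∈ s, Cg O q N (f i) (g i)) :
    Cg O q N (∑ i ∈ s, f i) (∑ i ∈ s, g i) := by
  unfold Cg at *; rw [← Finset.sum_sub_distrib]; exact (II O q N).sum_mem h

theorem Cg.mul_left (hc : c ∈ O) (h : Cg O q N a b) : Cg O q N (c * a) (c * b) := by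
  unfold Cg at *; rw [← mul_sub]; exact II_O_mul hc h

theorem Cg.mul_right (hc : c ∈ O) (h : Cg O q N a b) : Cg O q N (a * c) (b * c) := by
  unfold Cg at *; rw [← sub_mul]; exact II_mul_O h hc

theorem Cg.of_mem (h : a ∈ II O q N) : Cg O q N a 0 := by
  unfold Cg; rwa [sub_zero]

theorem Cg.add_mem (h : b ∈ II O q N) : Cg O q N (a + b) a := by
  unfold Cg; rwa [add_sub_cancel_left]

theorem Cg.mem (h : Cg O q N a b) (hb : b ∈ II O q N) : a ∈ II O q N := by
  unfold Cg at h; have := (II O q N).add_mem h hb; rwa [sub_add_cancel] at this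

end framework

section poch

variable {K : Type*} [Field K]

/-- `(x; x)_n`. -/
def ph (x : K) (n : ℕ) : K := ∏ j ∈ Finset.range n, (1 - x ^ (j + 1))

/-- `(-x; x)_n`. -/
def pm (x : K) (n : ℕ) : K := ∏ j ∈ Finset.range n, (1 + x ^ (j + 1))

/-- triangular numbers `r (r - 1) / 2`. -/
def tr : ℕ → ℕ
  | 0 => 0
  | r + 1 => tr r + r

theorem tr_succ (r : ℕ) : tr (r + 1) = tr r + r := rfl

theorem tr_two (r : ℕ) : tr r + tr r + r = r * r := by
  induction r with
  | zero => rfl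
  | succ r ih => rw [tr_succ]; linarith

@[simp] theorem ph_zero (x : K) : ph x 0 = 1 := by simp [ph]
@[simp] theorem pm_zero (x : K) : pm x 0 = 1 := by simp [pm]
theorem ph_succ (x : K) (n : ℕ) : ph x (n + 1) = ph x n * (1 - x ^ (n + 1)) := by
  simp [ph, Finset.prod_range_succ]
theorem pm_succ (x : K) (n : ℕ) : pm x (n + 1) = pm x n * (1 + x ^ (n + 1)) := by
  simp [pm, Finset.prod_range_succ]

variable {O : Subring K} {x : K}

theorem Loc.ph_ne (h : Loc O x) (n : ℕ) : ph x n ≠ 0 := by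
  rw [ph, Finset.prod_ne_zero_iff]; intro j _; exact (h.one_sub_pow j).1

theorem Loc.pm_ne (h : Loc O x) (n : ℕ) : pm x n ≠ 0 := by
  rw [pm, Finset.prod_ne_zero_iff]; intro j _; exact (h.one_add_pow j).1

theorem Loc.ph_mem (h : Loc O x) (n : ℕ) : ph x n ∈ O :=
  O.prod_mem fun j _ => O.sub_mem O.one_mem (O.pow_mem h.mem _)

theorem Loc.pm_mem (h : Loc O x) (n : ℕ) : pm x n ∈ O :=
  O.prod_mem fun j _ => O.add_mem O.one_mem (O.pow_mem h.mem _)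

theorem Loc.ph_inv (h : Loc O x) (n : ℕ) : (ph x n)⁻¹ ∈ O := by
  rw [ph, ← Finset.prod_inv_distrib]; exact O.prod_mem fun j _ => (h.one_sub_pow j).2

theorem Loc.pm_inv (h : Loc O x) (n : ℕ) : (pm x n)⁻¹ ∈ O := by
  rw [pm, ← Finset.prod_inv_distrib]; exact O.prod_mem fun j _ => (h.one_add_pow j).2

end poch


section bailey

variable {K : Type*} [Field K]

/-- `1 / ((x)_{n-r} (x)_{n+r})`. -/
def ee (x : K) (n r : ℕ) : K := if r ≤ n then (ph x (n - r) * ph x (n + r))⁻¹ else 0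

/-- The coefficients of the unit Bailey pair. -/
def ww (x : K) (r : ℕ) : K := if r = 0 then 1 else (-1) ^ r * x ^ tr r * (1 + x ^ r)

/-- The `α_r`. -/
def al (x : K) (r : ℕ) : K := if r = 0 then 1 else 4 * (-1) ^ r * x ^ tr (r + 1) / (1 + x ^ r)

/-- The `d_n = (-1)_n x^{n(n+1)/2}`. -/
def dd (x : K) : ℕ → K
  | 0 => 1
  | n + 1 => dd x n * (1 + x ^ n) * x ^ (n + 1)

theorem ee_add (x : K) (r k : ℕ) : ee x (r + k) r = (ph x k * ph x (r + k + r))⁻¹ := by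
  unfold ee; rw [if_pos (by omega)]; congr; omega

theorem ee_lt (x : K) {n r : ℕ} (h : n < r) : ee x n r = 0 := by
  unfold ee; rw [if_neg (by omega)]

variable {O : Subring K} {x : K}

theorem Loc.ee_mem (h : Loc O x) (n r : ℕ) : ee x n r ∈ O := by
  unfold ee; split_ifs
  · rw [mul_inv]; exact O.mul_mem (h.ph_inv _) (h.ph_inv _)
  · exact O.zero_mem

theorem Z_partial (h : Loc O x) (R k : ℕ) :
    (1 - x ^ (R + 1 + k)) * ∑ r ∈ Finset.range (R + 1), ww x r * ee x (R + 1 + k) r =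
      (-1) ^ R * x ^ tr (R + 1) / (ph x k * ph x (R + 1 + k + R)) := by
  induction R generalizing k with
  | zero =>
    have h1 := h.ph_ne k
    have h2 := h.ph_ne (k + 1)
    have h3 := (h.one_sub_pow k).1
    simp only [zero_add, Finset.sum_range_one, tr, ww, ee, if_true, Nat.zero_le]
    rw [show 1 + k = k + 1 by ring, Nat.sub_zero, Nat.add_zero, ph_succ]
    field_simp
  | succ R ih =>
    rw [Finset.sum_range_succ, mul_add, show R + 1 + 1 + k = R + 1 + (k + 1) by ring, ih, ee_add,
      ww, if_neg (by omega), show R + 1 + (k + 1) + (R + 1) = R + 1 + (k + 1) + R + 1 by ring,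
      ph_succ x k, ph_succ x (R + 1 + (k + 1) + R), tr_succ (R + 1)]
    have h1 := h.ph_ne k
    have h2 := h.ph_ne (R + 1 + (k + 1) + R)
    have h3 := (h.one_sub_pow k).1
    have h4 := (h.one_sub_pow (R + 1 + (k + 1) + R)).1
    field_simp
    ring

theorem Z_zero (h : Loc O x) (n : ℕ) :
    ∑ r ∈ Finset.range (n + 2), ww x r * ee x (n + 1) r = 0 := by
  have h0 := Z_partial h n 0
  simp only [ph_zero, Nat.add_zero] at h0
  have h3 := (h.one_sub_pow n).1
  refine (mul_right_inj' h3).1 ?_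
  rw [Finset.sum_range_succ, mul_add, h0]
  have := ee_add x (n + 1) 0
  simp only [Nat.add_zero, ph_zero] at this
  rw [this, ww, if_neg (by omega), show n + 1 + (n + 1) = n + 1 + n + 1 by ring, ph_succ]
  have h2 := h.ph_ne (n + 1 + n)
  have h4 := (h.one_sub_pow (n + 1 + n)).1
  field_simp
  ring

theorem sum_ext_range (f : ℕ → K) {n M : ℕ} (hn : n ≤ M) :
    ∑ r ∈ Finset.range (M + 1), f r * ee x n r = ∑ r ∈ Finset.range (n + 1), f r * ee x n r := by
  symm
  apply Finset.sum_subset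
  · intro r hr; simp at *; omega
  · intro r _ hr; simp at hr; rw [ee_lt x (by omega), mul_zero]

theorem Z_eq (h : Loc O x) {n M : ℕ} (hn : n ≤ M) :
    ∑ r ∈ Finset.range (M + 1), ww x r * ee x n r = if n = 0 then 1 else 0 := by
  rw [sum_ext_range _ hn]
  rcases n with _ | n
  · simp [ww, ee]
  · rw [Z_zero h]; simp

theorem al_term (h : Loc O x) (n r : ℕ) (hr : r ≤ n + 1) :
    (1 + x ^ (n + 1)) ^ 2 * (al x r * ee x (n + 1) r) =
      al x r * ee x n r + 4 * x ^ (n + 1) * (ww x r * ee x (n + 1) r) := by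
  have hal : al x r * (1 + x ^ r) ^ 2 = 4 * x ^ r * ww x r := by
    unfold al ww
    split_ifs with h0
    · subst h0; norm_num
    · obtain ⟨s, rfl⟩ : ∃ s, r = s + 1 := ⟨r - 1, by omega⟩
      have := (h.one_add_pow s).1
      rw [tr_succ (s + 1)]
      field_simp
      ring
  obtain ⟨k, hk⟩ := Nat.exists_eq_add_of_le hr
  rw [hk, ee_add]
  rcases k with _ | k
  · rw [ee_lt x (show n < r by omega)]
    simp only [Nat.add_zero, ph_zero]
    linear_combination (ph x (r + r))⁻¹ * hal
  · have hn : n = r + k := by omega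
    subst hn
    rw [ee_add, show r + (k + 1) + r = r + k + r + 1 by ring, ph_succ, ph_succ]
    have h1 := h.ph_ne k
    have h2 := h.ph_ne (r + k + r)
    have h3 := (h.one_sub_pow k).1
    have h4 := (h.one_sub_pow (r + k + r)).1
    field_simp
    rw [show r + (k + 1) = r + k + 1 by ring] at *
    rcases r with _ | r
    · simp only [pow_zero, al, ww, if_true]; ring
    have hx : x ^ (r + 1) ≠ 0 := pow_ne_zero _ h.ne
    refine (mul_right_inj' hx).1 ?_
    linear_combination x ^ (r + 1 + k + 1) * hal

theorem pair (h : Loc O x) (n : ℕ) :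
    ∑ r ∈ Finset.range (n + 1), al x r * ee x n r = ((pm x n) ^ 2)⁻¹ := by
  induction n with
  | zero => simp [al, ee]
  | succ n ih =>
    have h1 := (h.one_add_pow n).1
    have h2 : (1 + x ^ (n + 1)) ^ 2 ≠ 0 := pow_ne_zero _ h1
    refine (mul_right_inj' h2).1 ?_
    rw [Finset.mul_sum, Finset.sum_congr rfl
      (fun r hr => al_term h n r (by simp at hr; omega)), Finset.sum_add_distrib,
      ← Finset.mul_sum, Z_zero h, mul_zero, add_zero, sum_ext_range _ (Nat.le_succ n), ih, pm_succ]
    have h3 := h.pm_ne n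
    field_simp

/-- The conjugate sums. -/
def ga (x : K) (M r : ℕ) : K := ∑ n ∈ Finset.range (M + 1), dd x n * ee x n r

/-- certificate -/
def gg (x : K) (r n : ℕ) : K :=
  if r + 1 ≤ n then -(1 - x ^ (2 * r + 1)) * dd x n * (ph x (n - r - 1) * ph x (n + r))⁻¹ else 0

theorem gg_step (h : Loc O x) (n r : ℕ) :
    (1 + x ^ (r + 1)) * (dd x n * ee x n (r + 1)) =
      x ^ (r + 1) * (1 + x ^ r) * (dd x n * ee x n r) + (gg x r (n + 1) - gg x r n) := by
  rcases lt_trichotomy n r with hn | hn | hn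
  · rw [ee_lt x (by omega), ee_lt x hn, gg, if_neg (by omega), gg, if_neg (by omega)]; ring
  · subst hn
    rw [ee_lt x (by omega), gg, if_pos le_rfl, gg, if_neg (by omega), dd]
    have := ee_add x n 0
    simp only [Nat.add_zero, ph_zero] at this
    rw [this, show n + 1 - n - 1 = 0 by omega, show n + 1 + n = n + n + 1 by ring, ph_succ, ph_zero]
    have h2 := h.ph_ne (n + n)
    have h4 := (h.one_sub_pow (n + n)).1
    field_simp
    ring
  · obtain ⟨k, rfl⟩ : ∃ k, n = r + 1 + k := ⟨n - r - 1, by omega⟩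
    rw [ee_add, show r + 1 + k = r + (k + 1) by ring, ee_add, gg, if_pos (by omega), gg,
      if_pos (by omega), dd, show r + (k + 1) + 1 - r - 1 = k + 1 by omega,
      show r + (k + 1) - r - 1 = k by omega, show r + (k + 1) + (r + 1) = r + (k + 1) + r + 1 by ring,
      show r + (k + 1) + 1 + r = r + (k + 1) + r + 1 by ring, ph_succ x (r + (k + 1) + r), ph_succ x k]
    have h1 := h.ph_ne k
    have h2 := h.ph_ne (r + (k + 1) + r)
    have h3 := (h.one_sub_pow k).1
    have h4 := (h.one_sub_pow (r + (k + 1) + r)).1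
    field_simp
    ring

theorem ga_step (h : Loc O x) (M r : ℕ) :
    (1 + x ^ (r + 1)) * ga x M (r + 1) =
      x ^ (r + 1) * ((1 + x ^ r) * ga x M r) + gg x r (M + 1) := by
  unfold ga
  rw [Finset.mul_sum, Finset.sum_congr rfl (fun n _ => gg_step h n r), Finset.sum_add_distrib,
    Finset.sum_range_sub, ← Finset.mul_sum]
  have : gg x r 0 = 0 := by unfold gg; rw [if_neg (by omega)]
  rw [this]; ring

theorem Loc.dd_mem (h : Loc O x) (n : ℕ) : dd x n ∈ II O x n := by
  induction n with
  | zero => exact II_zero.2 O.one_mem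
  | succ n ih =>
    rw [dd]
    have : dd x n * (1 + x ^ n) ∈ O :=
      O.mul_mem (h.toO ih) (O.add_mem O.one_mem (O.pow_mem h.mem _))
    exact II_O_mul this (pow_II _)

theorem Loc.gg_mem (h : Loc O x) (r n : ℕ) : gg x r n ∈ II O x n := by
  unfold gg; split_ifs
  · rw [mul_inv]
    refine II_mul_O (II_O_mul (O.neg_mem (O.sub_mem O.one_mem (O.pow_mem h.mem _))) (h.dd_mem n))
      (O.mul_mem (h.ph_inv _) (h.ph_inv _))
  · exact (II O x n).zero_mem

theorem ga_cg (h : Loc O x) (M r : ℕ) :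
    Cg O x (M + 1) ((1 + x ^ r) * ga x M r) (2 * x ^ tr (r + 1) * ga x M 0) := by
  induction r with
  | zero => exact Cg.of_eq (by simp only [tr, pow_zero]; ring)
  | succ r ih =>
    rw [ga_step h]
    refine (Cg.add_mem (h.gg_mem _ _)).trans ?_
    refine (Cg.mul_left (O.pow_mem h.mem _) ih).trans (Cg.of_eq ?_)
    rw [tr_succ (r + 1)]; ring

theorem Loc.ga_mem (h : Loc O x) (M r : ℕ) : ga x M r ∈ O :=
  O.sum_mem fun n _ => O.mul_mem (h.toO (h.dd_mem n)) (h.ee_mem n r)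

theorem ga_theta (h : Loc O x) (M : ℕ) :
    Cg O x (M + 1)
      (ga x M 0 * (1 + 2 * ∑ r ∈ Finset.range M, (-1) ^ (r + 1) * x ^ ((r + 1) * (r + 1)))) 1 := by
  have h1 : ∑ r ∈ Finset.range (M + 1), ww x r * ga x M r = 1 := by
    unfold ga
    simp_rw [Finset.mul_sum]
    rw [Finset.sum_comm]
    have : ∀ n ∈ Finset.range (M + 1), ∑ r ∈ Finset.range (M + 1), ww x r * (dd x n * ee x n r)
        = dd x n * (if n = 0 then 1 else 0) := by
      intro n hn
      rw [← Z_eq h (show n ≤ M by simp at hn; omega), Finset.mul_sum]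
      exact Finset.sum_congr rfl fun r _ => by ring
    rw [Finset.sum_congr rfl this]
    simp [dd]
  rw [Finset.sum_range_succ'] at h1
  refine Cg.symm ?_
  refine (Cg.of_eq h1.symm).trans ?_
  rw [mul_add, mul_one, add_comm (∑ k ∈ Finset.range M, _)]
  refine Cg.add (Cg.of_eq (by simp [ww])) ?_
  rw [Finset.mul_sum, Finset.mul_sum]
  refine Cg.sum fun r _ => ?_
  rw [ww, if_neg (by omega), mul_assoc]
  refine (Cg.mul_left ?_ (ga_cg h M (r + 1))).trans (Cg.of_eq ?_)
  · exact O.mul_mem (O.pow_mem (O.neg_mem O.one_mem) _) (O.pow_mem h.mem _)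
  · rw [← tr_two, tr_succ (r + 1)]; ring

theorem A_cg (h : Loc O x) (M : ℕ) :
    Cg O x (M + 1) (∑ n ∈ Finset.range (M + 1), dd x n * ((pm x n) ^ 2)⁻¹)
      (ga x M 0 * (1 + 8 * ∑ r ∈ Finset.range M,
        (-1) ^ (r + 1) * x ^ ((r + 1) * (r + 1) + (r + 1)) / (1 + x ^ (r + 1)) ^ 2)) := by
  have h1 : ∑ n ∈ Finset.range (M + 1), dd x n * ((pm x n) ^ 2)⁻¹ =
      ∑ r ∈ Finset.range (M + 1), al x r * ga x M r := by
    unfold ga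
    simp_rw [Finset.mul_sum]
    rw [Finset.sum_comm]
    refine Finset.sum_congr rfl fun n hn => ?_
    rw [← pair h, ← sum_ext_range _ (show n ≤ M by simp at hn; omega), Finset.mul_sum]
    exact Finset.sum_congr rfl fun r _ => by ring
  rw [h1, Finset.sum_range_succ', mul_add, mul_one, add_comm (∑ k ∈ Finset.range M, _)]
  refine Cg.add (Cg.of_eq (by simp [al])) ?_
  rw [Finset.mul_sum, Finset.mul_sum]
  refine Cg.sum fun r _ => ?_
  have h2 := h.one_add_pow r
  have h3 : al x (r + 1) * ga x M (r + 1) =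
      (4 * (-1) ^ (r + 1) * x ^ tr (r + 1 + 1) * ((1 + x ^ (r + 1))⁻¹ * (1 + x ^ (r + 1))⁻¹)) *
      ((1 + x ^ (r + 1)) * ga x M (r + 1)) := by
    rw [al, if_neg (by omega)]
    have := h2.1
    field_simp
  rw [h3]
  refine (Cg.mul_left ?_ (ga_cg h M (r + 1))).trans (Cg.of_eq ?_)
  · have h4 : (4 : K) ∈ O := by exact_mod_cast natCast_mem O 4
    exact O.mul_mem (O.mul_mem (O.mul_mem h4 (O.pow_mem (O.neg_mem O.one_mem) _))
      (O.pow_mem h.mem _)) (O.mul_mem h2.2 h2.2)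
  · have := h2.1
    rw [← tr_two, tr_succ (r + 1)]; field_simp; ring

end bailey


section sigma

variable {K : Type*} [Field K] {O : Subring K} {x : K}

theorem Loc.sq (h : Loc O x) : Loc O (x ^ 2) where
  mem := O.pow_mem h.mem 2
  ne := pow_ne_zero _ h.ne
  inv := fun u hu => by
    have := h.inv (x * u) (O.mul_mem h.mem hu)
    rwa [show 1 + x * (x * u) = 1 + x ^ 2 * u by ring] at this

theorem Loc.sq_II (h : Loc O x) {N : ℕ} {a : K} (ha : a ∈ II O (x ^ 2) N) : a ∈ II O x N := by
  obtain ⟨c, hc, rfl⟩ := II_iff.1 ha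
  refine II_iff.2 ⟨x ^ N * c, O.mul_mem (O.pow_mem h.mem _) hc, by ring⟩

theorem P_step (h : Loc O x) (n r : ℕ) (hr : r ≤ n + 1) :
    ph x (n + 1) ^ 2 * ee x (n + 1) r - ph x n ^ 2 * ee x n r =
      ph x n ^ 2 * ee x (n + 1) r * x ^ (n + 1 - r) * (1 - x ^ r) ^ 2 := by
  obtain ⟨k, hk⟩ := Nat.exists_eq_add_of_le hr
  rw [show n + 1 - r = k by omega, ph_succ]
  rcases k with _ | k
  · rw [ee_lt x (show n < r by omega), hk]
    simp only [Nat.add_zero]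
    ring
  · have hn : n = r + k := by omega
    subst hn
    rw [show r + k + 1 = r + (k + 1) by ring, ee_add, ee_add,
      show r + (k + 1) + r = r + k + r + 1 by ring, ph_succ x k, ph_succ x (r + k + r)]
    have h1 := h.ph_ne k
    have h2 := h.ph_ne (r + k + r)
    have h3 := (h.one_sub_pow k).1
    have h4 := (h.one_sub_pow (r + k + r)).1
    field_simp
    ring

theorem sigma_exact (h : Loc O x) (M : ℕ) :
    ∑ t ∈ Finset.range M, x ^ (t + 1) / (1 - x ^ (t + 1)) ^ 2 +
      ∑ r ∈ Finset.range M, (-1) ^ (r + 1) * x ^ tr (r + 2) * (1 + x ^ (r + 1)) /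
        (1 - x ^ (r + 1)) ^ 2 * (ph x M ^ 2 * ee x M (r + 1)) = 0 := by
  induction M with
  | zero => simp
  | succ n ih =>
    have hz := Z_zero h n
    rw [Finset.sum_range_succ'] at hz
    have hlast : ∑ r ∈ Finset.range n, (-1) ^ (r + 1) * x ^ tr (r + 2) * (1 + x ^ (r + 1)) /
        (1 - x ^ (r + 1)) ^ 2 * (ph x n ^ 2 * ee x n (r + 1)) =
        ∑ r ∈ Finset.range (n + 1), (-1) ^ (r + 1) * x ^ tr (r + 2) * (1 + x ^ (r + 1)) /
        (1 - x ^ (r + 1)) ^ 2 * (ph x n ^ 2 * ee x n (r + 1)) := by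
      rw [Finset.sum_range_succ _ n, ee_lt x (Nat.lt_succ_self n)]; ring
    have hdiff : ∑ r ∈ Finset.range (n + 1), (-1) ^ (r + 1) * x ^ tr (r + 2) * (1 + x ^ (r + 1)) /
        (1 - x ^ (r + 1)) ^ 2 * (ph x (n + 1) ^ 2 * ee x (n + 1) (r + 1)) =
        ∑ r ∈ Finset.range (n + 1), (-1) ^ (r + 1) * x ^ tr (r + 2) * (1 + x ^ (r + 1)) /
        (1 - x ^ (r + 1)) ^ 2 * (ph x n ^ 2 * ee x n (r + 1)) +
        ph x n ^ 2 * x ^ (n + 1) *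
          ∑ r ∈ Finset.range (n + 1), ww x (r + 1) * ee x (n + 1) (r + 1) := by
      rw [Finset.mul_sum, ← Finset.sum_add_distrib]
      refine Finset.sum_congr rfl fun r hr => ?_
      have hr' : r + 1 ≤ n + 1 := by simp at hr; omega
      have hP := P_step h n (r + 1) hr'
      obtain ⟨k, hk⟩ := Nat.exists_eq_add_of_le hr'
      rw [show n + 1 - (r + 1) = k by omega] at hP
      rw [eq_add_of_sub_eq hP, ww, if_neg (by omega), tr_succ (r + 1), hk]
      have h1 := (h.one_sub_pow r).1
      field_simp
      ring
    have h0 : ww x 0 * ee x (n + 1) 0 = (ph x (n + 1) ^ 2)⁻¹ := by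
      simp [ww, ee]; ring
    rw [h0] at hz
    rw [hdiff, eq_neg_of_add_eq_zero_left hz, ← hlast, Finset.sum_range_succ, ph_succ]
    have h1 := (h.one_sub_pow n).1
    have h2 := h.ph_ne n
    have h3 : ph x n ^ 2 * x ^ (n + 1) * -((ph x n * (1 - x ^ (n + 1))) ^ 2)⁻¹ =
      - (x ^ (n + 1) / (1 - x ^ (n + 1)) ^ 2) := by field_simp
    rw [h3]
    linear_combination ih

theorem ph_ratio (h : Loc O x) (a b : ℕ) : ph x (a + b) / ph x a - 1 ∈ II O x (a + 1) := by
  induction b with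
  | zero => rw [show a + 0 = a from rfl, div_self (h.ph_ne a), sub_self]; exact (II O x _).zero_mem
  | succ b ih =>
    rw [← Nat.add_assoc, ph_succ]
    have : ph x (a + b) * (1 - x ^ (a + b + 1)) / ph x a - 1 =
      (ph x (a + b) / ph x a - 1) - x ^ (a + b + 1) * (ph x (a + b) * (ph x a)⁻¹) := by ring
    rw [this]
    exact (II O x _).sub_mem ih (II_mul_O (h.pow_mem (by omega))
      (O.mul_mem (h.ph_mem _) (h.ph_inv _)))

theorem P_one (h : Loc O x) (r k : ℕ) :
    ph x (r + k) ^ 2 * ee x (r + k) r - 1 ∈ II O x (k + 1) := by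
  rw [ee_add]
  have h1 := ph_ratio h k r
  have h2 := ph_ratio h (r + k) r
  have e1 := h.ph_ne k
  have e2 := h.ph_ne (r + k)
  have e3 := h.ph_ne (r + k + r)
  have : ph x (r + k) ^ 2 * (ph x k * ph x (r + k + r))⁻¹ - 1 =
    (ph x (k + r) / ph x k - 1) * (ph x (r + k) * (ph x (r + k + r))⁻¹) -
    (ph x (r + k + r) / ph x (r + k) - 1) * (ph x (r + k) * (ph x (r + k + r))⁻¹) := by
    rw [Nat.add_comm k r]; field_simp; ring
  rw [this]
  have m := O.mul_mem (h.ph_mem (r + k)) (h.ph_inv (r + k + r))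
  exact (II O x _).sub_mem (II_mul_O h1 m) (II_mul_O (h.mono (by omega) h2) m)

theorem sigma_cg (h : Loc O x) (M : ℕ) :
    ∑ t ∈ Finset.range M, x ^ (t + 1) / (1 - x ^ (t + 1)) ^ 2 +
      ∑ r ∈ Finset.range M, (-1) ^ (r + 1) * x ^ tr (r + 2) * (1 + x ^ (r + 1)) /
        (1 - x ^ (r + 1)) ^ 2 ∈ II O x (M + 1) := by
  refine Cg.mem ?_ (b := 0) (II O x _).zero_mem
  rw [← sigma_exact h M]
  refine (Cg.refl _).add (Cg.symm (Cg.sum fun r hr => ?_))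
  obtain ⟨k, hk⟩ : ∃ k, M = r + 1 + k := ⟨M - r - 1, by simp at hr; omega⟩
  have := P_one h (r + 1) k
  rw [← hk] at this
  have e : ∀ a b : K, a * b - a = a * (b - 1) := by intros; ring
  unfold Cg
  rw [e, tr_succ (r + 1)]
  have h1 := h.one_sub_pow r
  have e2 : ∀ y, (-1) ^ (r + 1) * x ^ (tr (r + 1) + (r + 1)) * (1 + x ^ (r + 1)) /
    (1 - x ^ (r + 1)) ^ 2 * y = (x ^ (r + 1) * y) * ((-1) ^ (r + 1) * x ^ tr (r + 1) *
      (1 + x ^ (r + 1)) * ((1 - x ^ (r + 1))⁻¹ ^ 2)) := by intro y; rw [inv_pow]; ring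
  rw [e2]
  refine II_mul_O ?_ ?_
  · have := II_mul (pow_II (r + 1)) this
    rwa [show r + 1 + (k + 1) = M + 1 by omega] at this
  · exact O.mul_mem (O.mul_mem (O.mul_mem (O.pow_mem (O.neg_mem O.one_mem) _)
      (O.pow_mem h.mem _)) (O.add_mem O.one_mem (O.pow_mem h.mem _))) (O.pow_mem h1.2 _)

theorem sigma_x (h : Loc O x) (M : ℕ) :
    Cg O x (M + 1) (∑ r ∈ Finset.range M,
        (-1) ^ (r + 1) * x ^ ((r + 1) * (r + 1) + (r + 1)) / (1 + x ^ (r + 1)) ^ 2)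
      (-(∑ t ∈ Finset.range M, x ^ (2 * (t + 1)) / (1 - x ^ (2 * (t + 1))) ^ 2 +
        2 * ∑ r ∈ Finset.range M, (-1) ^ (r + 1) * x ^ ((r + 1) * (r + 1) + 2 * (r + 1)) /
          (1 - x ^ (2 * (r + 1))) ^ 2)) := by
  unfold Cg
  have := h.sq_II (sigma_cg h.sq M)
  convert this using 1
  rw [sub_neg_eq_add, Finset.mul_sum, add_comm, add_assoc, ← Finset.sum_add_distrib]
  congr 1
  · exact Finset.sum_congr rfl fun t _ => by rw [← pow_mul]
  · refine Finset.sum_congr rfl fun r _ => ?_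
    have h1 := (h.one_add_pow r).1
    have h2 := (h.one_sub_pow r).1
    have e : (1 : K) - x ^ (2 * (r + 1)) = (1 - x ^ (r + 1)) * (1 + x ^ (r + 1)) := by ring
    rw [← pow_mul, ← pow_mul, e, show 2 * tr (r + 2) = (r + 1) * (r + 1) + (r + 1) by
      rw [← tr_two, tr_succ (r + 1)]; ring]
    field_simp
    ring

end sigma


section coth

variable {K : Type*} [Field K]

/-- `coth`-like function. -/
def cc (q : K) (n : ℤ) : K := (1 + q ^ (2 * n)) / (1 - q ^ (2 * n))

/-- `q ^ (d ^ 2)` -/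
def th (q : K) (d : ℤ) : K := q ^ (d.natAbs * d.natAbs)

/-- The auxiliary sequence `G_t`. -/
def GG (q : K) : ℕ → K
  | 0 => 0
  | t + 1 => 1 + q ^ (2 * t + 1) * (1 + GG q t)

/-- `H_t` -/
noncomputable def HH (q : K) (M : ℕ) (t : ℕ) : K :=
  ∑ d ∈ Finset.Icc (-(M : ℤ)) M, th q d * cc q (t + d) + 2 * t * q ^ (t * t)

/-- truncated theta -/
noncomputable def Th (q : K) (M : ℕ) : K := ∑ d ∈ Finset.Icc (-(M : ℤ)) M, th q d

theorem sum_fold (F : ℤ → K) (M : ℕ) : ∑ d ∈ Finset.Icc (-(M : ℤ)) M, F d =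
    F 0 + ∑ d ∈ Finset.range M, (F ((d : ℤ) + 1) + F (-((d : ℤ) + 1))) := by
  induction M with
  | zero => simp
  | succ M ih =>
    rw [Finset.sum_range_succ, ← add_assoc, ← ih]
    have : Finset.Icc (-((M + 1 : ℕ) : ℤ)) ((M + 1 : ℕ) : ℤ) =
      insert ((M : ℤ) + 1) (insert (-((M : ℤ) + 1)) (Finset.Icc (-(M : ℤ)) M)) := by
      ext d; simp only [Finset.mem_Icc, Finset.mem_insert]; push_cast; omega
    rw [this, Finset.sum_insert, Finset.sum_insert]
    · ring
    · simp only [Finset.mem_Icc]; omega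
    · simp only [Finset.mem_Icc, Finset.mem_insert]; omega

theorem sum_shift (F : ℤ → K) (M : ℕ) : ∑ d ∈ Finset.Icc (-(M : ℤ)) M, F (d + 1) =
    ∑ d ∈ Finset.Icc (-(M : ℤ)) M, F d + F (M + 1) - F (-M) := by
  rw [sum_fold, sum_fold]
  induction M with
  | zero => simp
  | succ M ih =>
    rw [Finset.sum_range_succ, Finset.sum_range_succ, ← add_assoc, ih]
    rw [show -((M : ℤ) + 1) + 1 = -M by ring]
    push_cast
    ring

variable {O : Subring K} {q : K}

theorem th_zpow (h : Loc O q) (d : ℤ) : th q d = q ^ (d * d) := by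
  rw [th, ← zpow_natCast]; congr 1; push_cast; exact abs_mul_abs_self d

theorem cc_zero : cc q 0 = 0 := by simp [cc]

theorem Loc.zpow_ne (h : Loc O q) {n : ℤ} (hn : n ≠ 0) : 1 - q ^ (2 * n) ≠ 0 := by
  rcases Int.lt_or_gt_of_ne hn with h1 | h1
  · obtain ⟨k, rfl⟩ : ∃ k : ℕ, n = -((k : ℤ) + 1) := ⟨(-n - 1).toNat, by omega⟩
    have h2 := (h.one_sub_pow (2 * k + 1)).1
    intro h3
    apply h2
    have h4 : q ^ (2 * -((k : ℤ) + 1)) = 1 := (sub_eq_zero.1 h3).symm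
    have h5 : q ^ (2 * k + 1 + 1) * q ^ (2 * -((k : ℤ) + 1)) = 1 := by
      rw [← zpow_natCast, ← zpow_add₀ h.ne]
      rw [show (((2 * k + 1 + 1 : ℕ) : ℤ) + 2 * -((k : ℤ) + 1)) = 0 by push_cast; ring, zpow_zero]
    rw [h4, mul_one] at h5
    rw [h5, sub_self]
  · obtain ⟨k, rfl⟩ : ∃ k : ℕ, n = ((k : ℤ) + 1) := ⟨(n - 1).toNat, by omega⟩
    have h2 := (h.one_sub_pow (2 * k + 1)).1
    rwa [← zpow_natCast, show ((2 * k + 1 + 1 : ℕ) : ℤ) = 2 * ((k : ℤ) + 1) by push_cast; ring] at h2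

theorem cc_neg (h : Loc O q) (n : ℤ) : cc q (-n) = - cc q n := by
  rcases eq_or_ne n 0 with rfl | hn
  · simp [cc]
  have h1 := h.zpow_ne hn
  have h2 : q ^ (2 * n) ≠ 0 := zpow_ne_zero _ h.ne
  have h3 : q ^ (2 * n) - 1 ≠ 0 := by rw [← neg_sub]; exact neg_ne_zero.2 h1
  rw [cc, cc, show 2 * -n = -(2 * n) by ring, zpow_neg]
  have h4 : 1 - (q ^ (2 * n))⁻¹ ≠ 0 := by
    have : 1 - (q ^ (2 * n))⁻¹ = (q ^ (2 * n) - 1) * (q ^ (2 * n))⁻¹ := by field_simp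
    rw [this]; exact mul_ne_zero h3 (inv_ne_zero h2)
  rw [← neg_div, div_eq_div_iff h4 h1]
  field_simp
  ring

theorem cc_nat (n : ℕ) : cc q ((n : ℤ) + 1) =
    (1 + q ^ (2 * (n + 1))) / (1 - q ^ (2 * (n + 1))) := by
  rw [cc, ← zpow_natCast]; push_cast; rfl

theorem cc_sub_one (h : Loc O q) (n : ℕ) : cc q ((n : ℤ) + 1) - 1 ∈ II O q (2 * (n + 1)) := by
  rw [cc_nat]
  have h1 := h.one_sub_pow (2 * n + 1)
  rw [show 2 * n + 1 + 1 = 2 * (n + 1) by ring] at h1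
  have := h1.1
  have e : (1 + q ^ (2 * (n + 1))) / (1 - q ^ (2 * (n + 1))) - 1 =
    q ^ (2 * (n + 1)) * (2 * (1 - q ^ (2 * (n + 1)))⁻¹) := by field_simp; ring
  rw [e]
  have h4 : (2 : K) ∈ O := by exact_mod_cast natCast_mem O 2
  exact II_mul_O (pow_II _) (O.mul_mem h4 h1.2)

theorem cc_mem (h : Loc O q) (n : ℤ) : cc q n ∈ O := by
  have key : ∀ k : ℕ, cc q ((k : ℤ) + 1) ∈ O := fun k => by
    have := O.add_mem (h.toO (cc_sub_one h k)) O.one_mem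
    rwa [sub_add_cancel] at this
  rcases lt_trichotomy n 0 with h1 | h1 | h1
  · obtain ⟨k, rfl⟩ : ∃ k : ℕ, n = -((k : ℤ) + 1) := ⟨(-n - 1).toNat, by omega⟩
    rw [cc_neg h]; exact O.neg_mem (key k)
  · rw [h1, cc_zero]; exact O.zero_mem
  · obtain ⟨k, rfl⟩ : ∃ k : ℕ, n = ((k : ℤ) + 1) := ⟨(n - 1).toNat, by omega⟩
    exact key k

theorem cc_rel (h : Loc O q) (n : ℤ) :
    (1 - q ^ (2 * n)) * cc q n = (1 + q ^ (2 * n)) - if n = 0 then 2 else 0 := by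
  split_ifs with hn
  · subst hn; simp [cc]; norm_num
  · rw [cc, sub_zero]; exact mul_div_cancel₀ _ (h.zpow_ne hn)

theorem cc_mul (h : Loc O q) {t u : ℤ} (ht : t ≠ 0) (hu : u ≠ 0) (htu : u - t ≠ 0) :
    cc q t * cc q u = 1 + cc q (u - t) * (cc q t - cc q u) := by
  obtain ⟨d, rfl⟩ : ∃ d, u = t + d := ⟨u - t, by ring⟩
  rw [add_sub_cancel_left] at *
  have h1 := h.zpow_ne ht
  have h2 := h.zpow_ne hu
  have h3 := h.zpow_ne htu
  unfold cc
  rw [mul_add, zpow_add₀ h.ne] at *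
  field_simp
  ring

theorem th_mem (h : Loc O q) (d : ℤ) : th q d ∈ O := O.pow_mem h.mem _

theorem Th_mem (h : Loc O q) (M : ℕ) : Th q M ∈ O := O.sum_mem fun d _ => th_mem h d

theorem HH_zero (h : Loc O q) (M : ℕ) : HH q M 0 = 0 := by
  unfold HH
  rw [sum_fold]
  have : ∀ d ∈ Finset.range M, th q ((d : ℤ) + 1) * cc q (((0 : ℕ) : ℤ) + ((d : ℤ) + 1)) +
      th q (-((d : ℤ) + 1)) * cc q (((0 : ℕ) : ℤ) + -((d : ℤ) + 1)) = 0 := by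
    intro d _
    have e : th q (-((d : ℤ) + 1)) = th q ((d : ℤ) + 1) := by unfold th; rw [Int.natAbs_neg]
    rw [e, Nat.cast_zero, zero_add, zero_add, cc_neg h]; ring
  rw [Finset.sum_eq_zero this]
  simp [cc_zero]

theorem HH_term (h : Loc O q) (t : ℕ) (d : ℤ) :
    th q d * cc q (((t + 1 : ℕ) : ℤ) + d) =
      th q d + q ^ (2 * t + 1) * th q (d + 1) + q ^ (2 * t + 1) * (th q (d + 1) * cc q (t + (d + 1)))
      - if d = -((t + 1 : ℕ) : ℤ) then 2 * th q d else 0 := by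
  have e1 : q ^ (2 * t + 1) * th q (d + 1) = th q d * q ^ (2 * ((t : ℤ) + (d + 1))) := by
    rw [th_zpow h, th_zpow h, ← zpow_natCast, ← zpow_add₀ h.ne, ← zpow_add₀ h.ne]
    congr 1; push_cast; ring
  have e2 := cc_rel h ((t : ℤ) + (d + 1))
  rw [← mul_assoc, e1, show ((t + 1 : ℕ) : ℤ) + d = (t : ℤ) + (d + 1) by push_cast; ring]
  have e3 : (if d = -((t + 1 : ℕ) : ℤ) then 2 * th q d else 0) =
      th q d * if (t : ℤ) + (d + 1) = 0 then 2 else 0 := by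
    by_cases hd : d = -((t + 1 : ℕ) : ℤ)
    · rw [if_pos hd, if_pos (by push_cast at hd; omega)]; ring
    · rw [if_neg hd, if_neg (by push_cast at hd; omega)]; ring
  rw [e3]
  linear_combination th q d * e2

theorem HH_step (h : Loc O q) (M t : ℕ) (ht : t + 1 ≤ M) :
    Cg O q (M + 1) (HH q M (t + 1)) (Th q M + q ^ (2 * t + 1) * (Th q M + HH q M t)) := by
  have e1 : ∑ d ∈ Finset.Icc (-(M : ℤ)) M, th q d * cc q (((t + 1 : ℕ) : ℤ) + d) =
      Th q M + q ^ (2 * t + 1) * (∑ d ∈ Finset.Icc (-(M : ℤ)) M, th q (d + 1)) +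
      q ^ (2 * t + 1) * (∑ d ∈ Finset.Icc (-(M : ℤ)) M, th q (d + 1) * cc q (t + (d + 1))) -
      2 * q ^ ((t + 1) * (t + 1)) := by
    rw [Finset.sum_congr rfl (fun d _ => HH_term h t d), Finset.sum_sub_distrib,
      Finset.sum_add_distrib, Finset.sum_add_distrib, ← Finset.mul_sum, ← Finset.mul_sum,
      Finset.sum_ite_eq', if_pos (by simp only [Finset.mem_Icc]; push_cast; omega)]
    rw [← Th, th, Int.natAbs_neg, Int.natAbs_natCast]
  have hthM : ∀ d : ℤ, M ≤ d.natAbs → q ^ (2 * t + 1) * th q d ∈ II O q (M + 1) := by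
    intro d hd
    rw [th, ← pow_add]
    apply h.pow_mem
    nlinarith
  unfold Cg HH
  rw [e1, sum_shift (fun d => th q d), sum_shift (fun d => th q d * cc q (t + d)), ← Th]
  have e2 : Th q M + q ^ (2 * t + 1) * (Th q M + th q (M + 1) - th q (-M)) +
      q ^ (2 * t + 1) * (∑ d ∈ Finset.Icc (-(M : ℤ)) M, th q d * cc q (t + d) +
        th q (M + 1) * cc q (t + (M + 1)) - th q (-M) * cc q (t + -M)) -
      2 * q ^ ((t + 1) * (t + 1)) + 2 * ((t + 1 : ℕ) : K) * q ^ ((t + 1) * (t + 1)) -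
      (Th q M + q ^ (2 * t + 1) * (Th q M + (∑ d ∈ Finset.Icc (-(M : ℤ)) M, th q d * cc q (t + d) +
        2 * t * q ^ (t * t)))) =
      (q ^ (2 * t + 1) * th q (M + 1)) * (1 + cc q (t + (M + 1))) -
      (q ^ (2 * t + 1) * th q (-M)) * (1 + cc q (t + -M)) := by
    push_cast; ring
  rw [e2]
  refine (II O q _).sub_mem (II_mul_O (hthM _ (by omega)) ?_) (II_mul_O (hthM _ (by omega)) ?_) <;>
  exact O.add_mem O.one_mem (cc_mem h _)

theorem GG_HH (h : Loc O q) (M t : ℕ) (ht : t ≤ M) :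
    Cg O q (M + 1) (Th q M * GG q t) (HH q M t) := by
  induction t with
  | zero => rw [HH_zero h, GG, mul_zero]; exact Cg.refl _
  | succ t ih =>
    refine Cg.trans ?_ (HH_step h M t ht).symm
    have := (((Cg.refl (Th q M)).add (ih (by omega))).mul_left
      (O.pow_mem h.mem (2 * t + 1))).add (Cg.refl (Th q M))
    rw [GG]
    refine Cg.trans (Cg.of_eq (by ring)) (this.trans (Cg.of_eq (by ring)))

/-- The positive series (truncated). -/
def EE (q : K) (M : ℕ) : K := ∑ t ∈ Finset.range M, (cc q ((t : ℤ) + 1) * GG q (t + 1) - 1)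

theorem cH_term (h : Loc O q) (M t : ℕ) :
    cc q ((t : ℤ) + 1) * HH q M (t + 1) - Th q M =
      (cc q ((t : ℤ) + 1) ^ 2 - 1) + ∑ d ∈ Finset.range M, th q ((d : ℤ) + 1) *
        (cc q ((d : ℤ) + 1) * (cc q ((t : ℤ) - d) - cc q ((t : ℤ) + d + 2)) +
          if d = t then cc q ((d : ℤ) + 1) ^ 2 - 1 else 0) +
      2 * (t + 1) * cc q ((t : ℤ) + 1) * q ^ ((t + 1) * (t + 1)) := by
  unfold HH Th
  rw [sum_fold, sum_fold]
  have e0 : th q 0 = 1 := by simp [th]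
  rw [e0, mul_add, mul_add, Finset.mul_sum]
  have key : ∀ d ∈ Finset.range M, th q ((d : ℤ) + 1) *
        (cc q ((d : ℤ) + 1) * (cc q ((t : ℤ) - d) - cc q ((t : ℤ) + d + 2)) +
          if d = t then cc q ((d : ℤ) + 1) ^ 2 - 1 else 0) =
      cc q ((t : ℤ) + 1) * (th q ((d : ℤ) + 1) * cc q (((t + 1 : ℕ) : ℤ) + ((d : ℤ) + 1)) +
      th q (-((d : ℤ) + 1)) * cc q (((t + 1 : ℕ) : ℤ) + -((d : ℤ) + 1))) -
      (th q ((d : ℤ) + 1) + th q (-((d : ℤ) + 1))) := by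
    intro d _
    have e : th q (-((d : ℤ) + 1)) = th q ((d : ℤ) + 1) := by unfold th; rw [Int.natAbs_neg]
    have c1 := cc_mul h (t := (t : ℤ) + 1) (u := (t : ℤ) + d + 2) (by omega) (by omega) (by omega)
    rw [show (t : ℤ) + d + 2 - (t + 1) = d + 1 by ring] at c1
    rw [e, show ((t + 1 : ℕ) : ℤ) + ((d : ℤ) + 1) = (t : ℤ) + d + 2 by push_cast; ring,
      show ((t + 1 : ℕ) : ℤ) + -((d : ℤ) + 1) = (t : ℤ) - d by push_cast; ring]
    split_ifs with hd
    · subst hd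
      rw [sub_self, cc_zero]
      linear_combination (-th q ((d : ℤ) + 1)) * c1
    · have c2 := cc_mul h (t := (t : ℤ) + 1) (u := (t : ℤ) - d) (by omega) (by omega) (by omega)
      rw [show (t : ℤ) - d - (t + 1) = -(d + 1) by ring, cc_neg h] at c2
      linear_combination (-th q ((d : ℤ) + 1)) * c1 - th q ((d : ℤ) + 1) * c2
  rw [Finset.sum_congr rfl key, Finset.sum_sub_distrib]
  push_cast
  rw [add_zero]
  ring

theorem cc_tele (h : Loc O q) (T d : ℕ) (hd : d ≤ T) :
    ∑ t ∈ Finset.range T, (cc q ((t : ℤ) + 1 - d) - cc q ((t : ℤ) + 1 + d)) - (cc q d - 2 * d) ∈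
      II O q (2 * (T - d + 1)) := by
  induction d with
  | zero => 
    simp [cc_zero]
  | succ d ih =>
    have e : ∑ t ∈ Finset.range T, (cc q ((t : ℤ) + 1 - (d + 1 : ℕ)) - cc q ((t : ℤ) + 1 + (d + 1 : ℕ)))
      = ∑ t ∈ Finset.range T, (cc q ((t : ℤ) + 1 - d) - cc q ((t : ℤ) + 1 + d)) -
        ∑ t ∈ Finset.range T, (cc q (((t + 1 : ℕ) : ℤ) - d) - cc q ((t : ℤ) - d)) -
        ∑ t ∈ Finset.range T, (cc q (((t + 1 : ℕ) : ℤ) + 1 + d) - cc q ((t : ℤ) + 1 + d)) := by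
      rw [← Finset.sum_sub_distrib, ← Finset.sum_sub_distrib]
      refine Finset.sum_congr rfl fun t _ => ?_
      push_cast
      rw [show (t : ℤ) + 1 - (d + 1) = t - d by ring,
        show (t : ℤ) + 1 + (d + 1) = t + 1 + 1 + d by ring]
      ring
    rw [e, Finset.sum_range_sub (fun t : ℕ => cc q ((t : ℤ) - d)),
      Finset.sum_range_sub (fun t : ℕ => cc q ((t : ℤ) + 1 + d))]
    have h1 := h.mono (show 2 * (T - (d + 1) + 1) ≤ _ by omega) (ih (by omega))
    obtain ⟨k, rfl⟩ : ∃ k, T = d + 1 + k := ⟨T - d - 1, by omega⟩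
    have h2 := cc_sub_one h k
    have h3 := cc_sub_one h (d + 1 + k + d)
    rw [show d + 1 + k - (d + 1) + 1 = k + 1 by omega] at *
    have h4 := (II O q _).sub_mem ((II O q _).sub_mem h1 h2) (h.mono (by omega) h3)
    convert h4 using 1
    push_cast
    rw [show (d : ℤ) + 1 + k - d = k + 1 by ring, zero_sub, cc_neg h,
      show (d : ℤ) + 1 + k + 1 + d = d + 1 + k + d + 1 by ring, show (1 : ℤ) + d = d + 1 by ring]
    ring

theorem theta_E (h : Loc O q) (M : ℕ) :
    Cg O q (M + 1) (Th q M * EE q M)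
      (∑ t ∈ Finset.range M, (cc q ((t : ℤ) + 1) ^ 2 - 1) +
        ∑ d ∈ Finset.range M, th q ((d : ℤ) + 1) * (2 * cc q ((d : ℤ) + 1) ^ 2 - 1)) := by
  have h1 : Cg O q (M + 1) (Th q M * EE q M)
      (∑ t ∈ Finset.range M, (cc q ((t : ℤ) + 1) * HH q M (t + 1) - Th q M)) := by
    rw [EE, Finset.mul_sum]
    refine Cg.sum fun t ht => ?_
    have := ((GG_HH h M (t + 1) (by simp at ht; omega)).mul_left (cc_mem h ((t : ℤ) + 1))).sub
      (Cg.refl (Th q M))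
    refine Cg.trans (Cg.of_eq (by ring)) this
  refine h1.trans ?_
  rw [Finset.sum_congr rfl (fun t _ => cH_term h M t), Finset.sum_add_distrib,
    Finset.sum_add_distrib, add_assoc]
  refine (Cg.refl _).add ?_
  rw [Finset.sum_comm, ← Finset.sum_add_distrib]
  refine Cg.sum fun d hd => ?_
  have hd' : d + 1 ≤ M := by simp at hd; omega
  rw [← Finset.mul_sum, Finset.sum_add_distrib, ← Finset.mul_sum, Finset.sum_ite_eq, if_pos hd]
  have h2 := cc_tele h M (d + 1) hd'
  unfold Cg
  have e : ∑ t ∈ Finset.range M, (cc q ((t : ℤ) - d) - cc q ((t : ℤ) + d + 2)) =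
    ∑ t ∈ Finset.range M, (cc q ((t : ℤ) + 1 - (d + 1 : ℕ)) - cc q ((t : ℤ) + 1 + (d + 1 : ℕ))) := by
    refine Finset.sum_congr rfl fun t _ => ?_
    congr 2 <;> push_cast <;> ring
  rw [e]
  have h3 : th q ((d : ℤ) + 1) = q ^ ((d + 1) * (d + 1)) := rfl
  have h4 := II_mul_O (II_mul (pow_II ((d + 1) * (d + 1))) h2) (cc_mem h ((d : ℤ) + 1))
  have h5 := h.mono (show M + 1 ≤ (d + 1) * (d + 1) + 2 * (M - (d + 1) + 1) by
    obtain ⟨k, rfl⟩ : ∃ k, M = d + 1 + k := ⟨M - d - 1, by omega⟩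
    rw [show d + 1 + k - (d + 1) + 1 = k + 1 by omega]; nlinarith) h4
  convert h5 using 1
  rw [h3]
  push_cast
  ring

theorem theta_eq (M : ℕ) : Th q M = 1 + 2 * ∑ d ∈ Finset.range M, q ^ ((d + 1) * (d + 1)) := by
  unfold Th
  rw [sum_fold, Finset.mul_sum]
  rw [show th q 0 = 1 by simp [th]]
  congr 1
  refine Finset.sum_congr rfl fun d _ => ?_
  have e : th q (-((d : ℤ) + 1)) = th q ((d : ℤ) + 1) := by unfold th; rw [Int.natAbs_neg]
  rw [e, show th q ((d : ℤ) + 1) = q ^ ((d + 1) * (d + 1)) from rfl]; ring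

theorem theta_final (h : Loc O q) (M : ℕ) :
    Cg O q (M + 1) (Th q M * (1 - 2 * EE q M))
      (1 - 8 * (∑ t ∈ Finset.range M, q ^ (2 * (t + 1)) / (1 - q ^ (2 * (t + 1))) ^ 2 +
        2 * ∑ r ∈ Finset.range M, q ^ ((r + 1) * (r + 1) + 2 * (r + 1)) /
          (1 - q ^ (2 * (r + 1))) ^ 2)) := by
  have hc : ∀ t : ℕ, cc q ((t : ℤ) + 1) ^ 2 =
      1 + 4 * (q ^ (2 * (t + 1)) / (1 - q ^ (2 * (t + 1))) ^ 2) := by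
    intro t
    have h1 := h.one_sub_pow (2 * t + 1)
    rw [show 2 * t + 1 + 1 = 2 * (t + 1) by ring] at h1
    have := h1.1
    rw [cc_nat]
    field_simp
    ring
  have h1 := theta_E h M
  have h4 : (2 : K) ∈ O := by exact_mod_cast natCast_mem O 2
  have h2 := (Cg.refl (Th q M)).sub (h1.mul_left h4)
  refine Cg.trans (Cg.of_eq (by ring)) (h2.trans (Cg.of_eq ?_))
  rw [theta_eq]
  have e1 : ∑ t ∈ Finset.range M, (cc q ((t : ℤ) + 1) ^ 2 - 1) =
      4 * ∑ t ∈ Finset.range M, q ^ (2 * (t + 1)) / (1 - q ^ (2 * (t + 1))) ^ 2 := by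
    rw [Finset.mul_sum]
    exact Finset.sum_congr rfl fun t _ => by rw [hc]; ring
  have e2 : ∑ d ∈ Finset.range M, th q ((d : ℤ) + 1) * (2 * cc q ((d : ℤ) + 1) ^ 2 - 1) =
      ∑ d ∈ Finset.range M, q ^ ((d + 1) * (d + 1)) +
      8 * ∑ r ∈ Finset.range M, q ^ ((r + 1) * (r + 1) + 2 * (r + 1)) /
          (1 - q ^ (2 * (r + 1))) ^ 2 := by
    rw [Finset.mul_sum, ← Finset.sum_add_distrib]
    refine Finset.sum_congr rfl fun d _ => ?_
    rw [hc, show th q ((d : ℤ) + 1) = q ^ ((d + 1) * (d + 1)) from rfl, pow_add]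
    ring
  rw [e1, e2]
  ring

end coth


section fine

variable {K : Type*} [Field K]

/-- The truncated rank generating function. -/
def TT (w x : K) (m : ℕ) : K := ∏ j ∈ Finset.range m, ((1 + w * x ^ (j + 1)) / (1 - w * x ^ (j + 1)))

/-- The truncated rank generating function. -/
def GF (w z x : K) (M : ℕ) : K :=
  1 + 2 * ∑ m ∈ Finset.range M, z ^ m * x ^ (m + 1) * TT w x m / (1 - w * x ^ (m + 1))

/-- The sums `U_k`. -/
def UU (x : K) (k M : ℕ) : K := ∑ m ∈ Finset.range M, ph x m * (-x ^ k) ^ m / pm x (k + m)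

variable {O : Subring K} {x : K}

theorem Cg.of_negq {N : ℕ} {a b : K} (h1 : Cg O (-x) N a b) : Cg O x N a b := by
  unfold Cg at h1 ⊢; rw [II_negq] at h1; exact h1

theorem Cg.q_mul {N : ℕ} {a b : K} (h1 : Cg O x N a b) : Cg O x (N + 1) (x * a) (x * b) := by
  unfold Cg at h1 ⊢
  rw [← mul_sub]
  have := II_mul (pow_II (q := x) (O := O) 1) h1
  rwa [pow_one, Nat.add_comm] at this

theorem UU_step (h : Loc O x) (k M : ℕ) :
    (1 + x ^ k) * UU x k (M + 1) = 1 / pm x k + (1 + x ^ k) * x ^ (k + 1) * UU x (k + 1) M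
      - ph x M / pm x (k + M) * (-x ^ k) ^ (M + 1) := by
  induction M with
  | zero =>
    have := h.pm_ne k
    simp [UU]
    field_simp
  | succ M ih =>
    rw [UU, Finset.sum_range_succ, mul_add, ← UU, ih, UU, UU, Finset.sum_range_succ,
      show k + 1 + M = k + M + 1 by ring, show k + (M + 1) = k + M + 1 by ring, pm_succ, ph_succ]
    have h1 := h.pm_ne k
    have h2 := h.pm_ne (k + M)
    have h3 := (h.one_add_pow (k + M)).1
    have e : (-x ^ (k + 1)) ^ M = (-x ^ k) ^ M * x ^ M := by rw [← mul_pow]; ring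
    rw [e]
    generalize ∑ m ∈ Finset.range M, ph x m * (-x ^ (k + 1)) ^ m / pm x (k + 1 + m) = S
    field_simp
    ring

theorem dd_closed (k : ℕ) : dd x (k + 1) = 2 * pm x k * x ^ tr (k + 2) := by
  induction k with
  | zero => simp [dd, tr]; norm_num
  | succ k ih => rw [dd, ih, pm_succ, tr_succ (k + 2)]; ring

theorem tr_ge (k : ℕ) : k ≤ tr (k + 1) := by rw [tr_succ]; omega

theorem UU_iter (h : Loc O x) (m k : ℕ) :
    Cg O x (k + 1 + m) (2 * x ^ tr (k + 2) * UU x (k + 1) m)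
      (∑ i ∈ Finset.range m, dd x (k + 1 + i) * ((pm x (k + 1 + i)) ^ 2)⁻¹) := by
  have h4 : (2 : K) ∈ O := by exact_mod_cast natCast_mem O 2
  induction m generalizing k with
  | zero => exact Cg.of_eq (by simp [UU])
  | succ m ih =>
    have h1 := UU_step h (k + 1) m
    have hk := h.one_add_pow k
    have hk1 := hk.1
    have hp := h.pm_ne k
    rw [Finset.sum_range_succ']
    have e : 2 * x ^ tr (k + 2) * UU x (k + 1) (m + 1) =
      2 * x ^ tr (k + 1 + 2) * UU x (k + 1 + 1) m + dd x (k + 1) * ((pm x (k + 1)) ^ 2)⁻¹ +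
      - (x ^ tr (k + 2) * (-x ^ (k + 1)) ^ (m + 1)) *
        (2 * ph x m * (pm x (k + 1 + m))⁻¹ * (1 + x ^ (k + 1))⁻¹) := by
      refine (mul_right_inj' hk1).1 ?_
      have e1 : (1 + x ^ (k + 1)) * (2 * x ^ tr (k + 2) * UU x (k + 1) (m + 1)) =
        2 * x ^ tr (k + 2) * ((1 + x ^ (k + 1)) * UU x (k + 1) (m + 1)) := by ring
      have hp2 := h.pm_ne (k + 1 + m)
      rw [e1, h1, dd_closed, pm_succ, tr_succ (k + 2)]
      field_simp
      ring
    rw [e]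
    refine (Cg.add_mem ?_).trans ?_
    · refine II_mul_O ((II O x _).neg_mem ?_) ?_
      · rw [neg_pow, ← mul_assoc, mul_right_comm]
        refine II_mul_O ?_ (O.pow_mem (O.neg_mem O.one_mem) _)
        rw [← pow_mul, ← pow_add]
        have := tr_ge (k + 1)
        apply h.pow_mem
        nlinarith
      · exact O.mul_mem (O.mul_mem (O.mul_mem h4 (h.ph_mem _)) (h.pm_inv _)) hk.2
    · refine Cg.add ?_ (Cg.refl _)
      have := ih (k + 1)
      rw [show k + 1 + 1 + m = k + 1 + (m + 1) by ring] at this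
      refine this.trans (Cg.of_eq (Finset.sum_congr rfl fun i _ => ?_))
      rw [show k + 1 + 1 + i = k + 1 + (i + 1) by ring]

theorem TT_neg (h : Loc O x) (m : ℕ) : TT (-1) x m = ph x m / pm x m := by
  rw [TT, ph, pm, ← Finset.prod_div_distrib]
  exact Finset.prod_congr rfl fun j _ => by congr 1 <;> ring

theorem GF_neg (h : Loc O x) (M : ℕ) :
    Cg O x (M + 1) (GF (-1) (-1) x M)
      (∑ n ∈ Finset.range (M + 1), dd x n * ((pm x n) ^ 2)⁻¹) := by
  have h1 := UU_iter h M 0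
  rw [show 0 + 1 + M = M + 1 by ring] at h1
  rw [Finset.sum_range_succ', add_comm (∑ k ∈ Finset.range M, _), GF]
  refine Cg.add (Cg.of_eq (by simp [dd])) ?_
  simp only [zero_add] at h1
  refine (Cg.of_eq ?_).trans (h1.trans (Cg.of_eq (Finset.sum_congr rfl fun i _ => ?_)))
  · rw [UU, mul_assoc]
    congr 1
    rw [Finset.mul_sum]
    refine Finset.sum_congr rfl fun m _ => ?_
    have h2 := h.pm_ne m
    have h3 := (h.one_add_pow m).1
    rw [TT_neg h, show 1 + m = m + 1 by ring, pm_succ, pow_one]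
    rw [show (1 : K) - -1 * x ^ (m + 1) = 1 + x ^ (m + 1) by ring, neg_pow x m]
    simp only [tr, zero_add]
    field_simp
    ring
  · rw [show 1 + i = i + 1 by ring]

theorem A_final (h : Loc O x) (M : ℕ) :
    Cg O x (M + 1) (GF (-1) (-1) x M) (1 - 2 * EE (-x) M) := by
  refine (GF_neg h M).trans ((A_cg h M).trans ?_)
  have h8 : (8 : K) ∈ O := by exact_mod_cast natCast_mem O 8
  have h1 := theta_final h.neg M
  have h2 := sigma_x h M
  have h3 := ga_theta h M
  have e1 : (1 + 2 * ∑ r ∈ Finset.range M, (-1) ^ (r + 1) * x ^ ((r + 1) * (r + 1))) =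
      Th (-x) M := by
    rw [theta_eq]
    congr 2
    refine Finset.sum_congr rfl fun r _ => ?_
    rw [neg_pow x, pow_mul (-1 : K)]
    rcases neg_one_pow_eq_or K (r + 1) with h | h <;> rw [h] <;> simp [*]
  rw [e1] at h3
  have h1' := h1.of_negq
  have hga := h.ga_mem M 0
  have hE : EE (-x) M ∈ O := by
    refine O.sum_mem fun t _ => O.sub_mem (O.mul_mem (cc_mem h.neg _) ?_) O.one_mem
    generalize t + 1 = s
    induction s with
    | zero => exact O.zero_mem
    | succ s ih => exact O.add_mem O.one_mem (O.mul_mem (O.pow_mem (O.neg_mem h.mem) _)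
        (O.add_mem O.one_mem ih))
  have h5 := ((Cg.refl (1 : K)).add (h2.mul_left h8)).mul_left hga
  have h2O : (2 : K) ∈ O := by exact_mod_cast natCast_mem O 2
  have h6 := h3.mul_right (O.sub_mem O.one_mem (O.mul_mem h2O hE))
  rw [one_mul] at h6
  refine h5.trans (Cg.trans ?_ h6)
  rw [mul_assoc]
  refine Cg.mul_left hga (Cg.trans (Cg.of_eq ?_) h1'.symm)
  have e2 : ∀ r : ℕ, (-x) ^ (2 * (r + 1)) = x ^ (2 * (r + 1)) := fun r => by
    rw [neg_pow, pow_mul]; simp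
  have e3 : ∀ r : ℕ, (-x) ^ ((r + 1) * (r + 1) + 2 * (r + 1)) =
      (-1) ^ (r + 1) * x ^ ((r + 1) * (r + 1) + 2 * (r + 1)) := fun r => by
    rw [neg_pow, pow_add, pow_mul, pow_mul (-1 : K) 2]
    rcases neg_one_pow_eq_or K (r + 1) with h | h <;> rw [h] <;> simp [*]
  simp_rw [e2, e3]
  ring

end fine

section imag

variable {K : Type*} [Field K] {O : Subring K} {q w : K}

/-- summands for `z = i` -/
def aa (w q : K) (k : ℕ) : ℕ → K
  | 0 => 1 / (1 - w * q ^ (k + 1))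
  | n + 1 => aa w q k n * ((1 + w * q ^ (k + n + 1)) / (1 - w * q ^ (k + n + 2))) *
      (-w * q ^ (k + 1))

theorem Loc.w_sub (h : Loc O q) (hw : w ∈ O) (n : ℕ) :
    1 - w * q ^ (n + 1) ≠ 0 ∧ (1 - w * q ^ (n + 1))⁻¹ ∈ O :=
  h.one_sub (II_O_mul hw (h.pow_mem (by omega)))

theorem Loc.w_add (h : Loc O q) (hw : w ∈ O) (n : ℕ) :
    1 + w * q ^ (n + 1) ≠ 0 ∧ (1 + w * q ^ (n + 1))⁻¹ ∈ O :=
  h.one_add (II_O_mul hw (h.pow_mem (by omega)))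

theorem aa_mem (h : Loc O q) (hw : w ∈ O) (k n : ℕ) : aa w q k n ∈ II O q n := by
  induction n with
  | zero => rw [aa, one_div]; exact II_zero.2 (h.w_sub hw k).2
  | succ n ih =>
    rw [aa, div_eq_mul_inv]
    refine II_mul (II_mul_O ih (O.mul_mem ?_ (h.w_sub hw _).2))
      (II_O_mul (O.neg_mem hw) (h.pow_mem (by omega)))
    exact O.add_mem O.one_mem (O.mul_mem hw (O.pow_mem h.mem _))

theorem aa_shift (h : Loc O q) (hw : w ∈ O) (k n : ℕ) :
    aa w q (k + 1) n * ((1 + w * q ^ (k + 1)) * (1 - w * q ^ (k + n + 2))) =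
      aa w q k n * ((1 + w * q ^ (k + n + 1)) * (1 - w * q ^ (k + 1)) * q ^ n) := by
  induction n with
  | zero =>
    have h1 := (h.w_sub hw k).1
    have h2 := (h.w_sub hw (k + 1)).1
    simp only [aa, Nat.add_zero, pow_zero]
    field_simp
  | succ n ih =>
    rw [aa, aa]
    have h1 := (h.w_sub hw (k + n + 1)).1
    have h2 := (h.w_sub hw (k + n + 2)).1
    rw [show k + 1 + n + 2 = k + n + 2 + 1 by ring, show k + 1 + n + 1 = k + n + 1 + 1 by ring,
      show k + (n + 1) + 2 = k + n + 2 + 1 by ring, show k + (n + 1) + 1 = k + n + 1 + 1 by ring]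
    have e : aa w q (k + 1) n * (1 + w * q ^ (k + 1)) =
      aa w q k n * ((1 + w * q ^ (k + n + 1)) * (1 - w * q ^ (k + 1)) * q ^ n) /
        (1 - w * q ^ (k + n + 1 + 1)) := by
      rw [← ih]; field_simp
    calc _ = (aa w q (k + 1) n * (1 + w * q ^ (k + 1))) * ((1 + w * q ^ (k + n + 1 + 1)) /
          (1 - w * q ^ (k + n + 2 + 1)) * (-w * q ^ (k + 1 + 1)) * (1 - w * q ^ (k + n + 2 + 1))) := by
            ring
      _ = _ := by rw [e]; field_simp; ring

theorem aa_tele (h : Loc O q) (hw : w ∈ O) (hw2 : w * w = -1) (k M : ℕ) :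
    ∑ n ∈ Finset.range M, aa w q k n = 1 + q ^ (2 * k + 3) * ∑ n ∈ Finset.range M, aa w q (k + 1) n
      - aa w q k M * (1 + q ^ (2 * (k + 1) + M)) / (1 + w * q ^ (k + 1)) := by
  have h0 := (h.w_add hw k).1
  induction M with
  | zero =>
    have h1 := (h.w_sub hw k).1
    simp only [aa, Finset.sum_range_zero]
    field_simp
    linear_combination (q ^ (k + 1)) ^ 2 * hw2
  | succ n ih =>
    rw [Finset.sum_range_succ, Finset.sum_range_succ, ih, aa]
    have h1 := (h.w_sub hw (k + n + 1)).1
    have e := aa_shift h hw k n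
    have e2 : aa w q (k + 1) n =
      aa w q k n * ((1 + w * q ^ (k + n + 1)) * (1 - w * q ^ (k + 1)) * q ^ n) /
        ((1 + w * q ^ (k + 1)) * (1 - w * q ^ (k + n + 1 + 1))) := by
      rw [← e]; field_simp
    rw [e2, mul_add]
    generalize ∑ n ∈ Finset.range n, aa w q (k + 1) n = S
    rw [show k + n + 2 = k + n + 1 + 1 by ring]
    generalize aa w q k n = a
    field_simp
    linear_combination (-a * (q ^ (2 * (k + 1) + n + 1) + q ^ (2 * (k + 1) + n))) * hw2

theorem aa_iter (h : Loc O q) (hw : w ∈ O) (hw2 : w * w = -1) (M J k : ℕ) :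
    Cg O q M (∑ n ∈ Finset.range M, aa w q k n)
      (∑ j ∈ Finset.range J, q ^ (j * j + 2 * (k + 1) * j) +
        q ^ (J * J + 2 * (k + 1) * J) * ∑ n ∈ Finset.range M, aa w q (k + J) n) := by
  induction J with
  | zero => exact Cg.of_eq (by simp)
  | succ J ih =>
    refine ih.trans ?_
    rw [aa_tele h hw hw2 (k + J) M, Finset.sum_range_succ, add_assoc (∑ j ∈ Finset.range J, _)]
    refine (Cg.refl _).add ?_
    rw [add_sub_assoc, mul_add, mul_one]
    refine (Cg.refl _).add ?_
    unfold Cg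
    have e : ∀ S : K, q ^ (J * J + 2 * (k + 1) * J) * (q ^ (2 * (k + J) + 3) * S -
      aa w q (k + J) M * (1 + q ^ (2 * (k + J + 1) + M)) / (1 + w * q ^ (k + J + 1))) -
      q ^ ((J + 1) * (J + 1) + 2 * (k + 1) * (J + 1)) * S =
      -(aa w q (k + J) M * (q ^ (J * J + 2 * (k + 1) * J) * ((1 + q ^ (2 * (k + J + 1) + M)) *
       (1 + w * q ^ (k + J + 1))⁻¹))) := by intro S; ring
    rw [← add_assoc k J 1, e]
    refine (II O q _).neg_mem (II_mul_O (aa_mem h hw _ _) ?_)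
    exact O.mul_mem (O.pow_mem h.mem _) (O.mul_mem (O.add_mem O.one_mem (O.pow_mem h.mem _))
      (h.w_add hw _).2)

theorem GF_aa (h : Loc O q) (hw : w ∈ O) (m : ℕ) :
    (-w) ^ m * q ^ (m + 1) * TT w q m / (1 - w * q ^ (m + 1)) = q * aa w q 0 m := by
  induction m with
  | zero => simp [TT, aa]; ring
  | succ m ih =>
    rw [aa, ← mul_assoc, ← mul_assoc q, ← ih, TT, Finset.prod_range_succ, ← TT]
    have h1 := (h.w_sub hw m).1
    have h2 := (h.w_sub hw (m + 1)).1
    simp only [zero_add]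
    field_simp
    ring

theorem B_final (h : Loc O q) (hw : w ∈ O) (hw2 : w * w = -1) (M : ℕ) :
    Cg O q (M + 1) (GF w (-w) q M) (1 + 2 * ∑ d ∈ Finset.range M, q ^ ((d + 1) * (d + 1))) := by
  have h2O : (2 : K) ∈ O := by exact_mod_cast natCast_mem O 2
  rw [GF, Finset.sum_congr rfl (fun m _ => GF_aa h hw m), ← Finset.mul_sum]
  refine (Cg.refl _).add (Cg.mul_left h2O ?_)
  have h1 := aa_iter h hw hw2 M M 0
  refine h1.q_mul.trans ?_
  rw [mul_add]
  refine (Cg.add_mem ?_).trans (Cg.of_eq ?_)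
  · rw [← mul_assoc]
    refine II_mul_O ?_ (O.sum_mem fun n _ => h.toO (aa_mem h hw _ _))
    rw [← pow_succ']
    apply h.pow_mem
    nlinarith
  · rw [Finset.mul_sum]
    exact Finset.sum_congr rfl fun d _ => by ring

end imag


section positivity

open PowerSeries

variable {K : Type*} [Field K] {O : Subring K} {q : K}

theorem geo_mem (h : Loc O q) (φ : ℕ⟦X⟧ →+* K) (hφ : φ X = q) (k : ℕ) :
    φ (PowerSeries.mk fun n => if (k + 1) ∣ n then 1 else 0) = (1 - q ^ (k + 1))⁻¹ := by
  have h1 : (PowerSeries.mk fun n => if (k + 1) ∣ n then (1 : ℕ) else 0) =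
      1 + X ^ (k + 1) * PowerSeries.mk fun n => if (k + 1) ∣ n then (1 : ℕ) else 0 := by
    ext n
    rw [map_add, coeff_X_pow_mul', coeff_mk, coeff_one]
    by_cases hn : n = 0
    · subst hn; simp
    · rw [if_neg hn]
      by_cases hk : k + 1 ≤ n
      · obtain ⟨j, rfl⟩ := Nat.exists_eq_add_of_le hk
        rw [if_pos hk, coeff_mk, Nat.add_sub_cancel_left, zero_add]
        simp
      · rw [if_neg hk, if_neg (fun hd => hk (Nat.le_of_dvd (Nat.pos_of_ne_zero hn) hd)), add_zero]
  have h2 := congrArg φ h1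
  rw [map_add, map_mul, map_pow, hφ, map_one] at h2
  have h3 := (h.one_sub_pow k).1
  refine eq_inv_of_mul_eq_one_left ?_
  linear_combination h2

theorem GG_mem (φ : ℕ⟦X⟧ →+* K) (hφ : φ X = q) (t : ℕ) : ∃ g, φ g = GG q t := by
  induction t with
  | zero => exact ⟨0, by simp [GG]⟩
  | succ t ih =>
    obtain ⟨g, hg⟩ := ih
    exact ⟨1 + X ^ (2 * t + 1) * (1 + g), by simp [hg, hφ, GG]⟩

theorem E_term (h : Loc O q) (φ : ℕ⟦X⟧ →+* K) (hφ : φ X = q) (t : ℕ) :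
    ∃ g, φ g = cc q ((t : ℤ) + 1) * GG q (t + 1) - 1 := by
  obtain ⟨g, hg⟩ := GG_mem φ hφ t
  have h1 := geo_mem h φ hφ (2 * t + 1)
  set s := PowerSeries.mk fun n => if (2 * t + 1 + 1) ∣ n then (1 : ℕ) else 0
  refine ⟨2 * X ^ (2 * (t + 1)) * s * (1 + X ^ (2 * t + 1) * (1 + g)) +
    X ^ (2 * t + 1) * (1 + g), ?_⟩
  have h3 := (h.one_sub_pow (2 * t + 1)).1
  rw [cc_nat, GG]
  simp only [map_add, map_mul, map_pow, hφ, hg, map_one, map_ofNat, h1]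
  rw [show 2 * t + 1 + 1 = 2 * (t + 1) by ring] at *
  field_simp
  ring

theorem E_pos (h : Loc O q) (φ : ℕ⟦X⟧ →+* K) (hφ : φ X = q) (M : ℕ) :
    ∃ g : ℕ⟦X⟧, φ g = EE q (M + 1) ∧ ∀ n, 2 ≤ n → 2 ≤ coeff n g := by
  choose f hf using E_term h φ hφ
  have h1 := geo_mem h φ hφ 0
  set s := PowerSeries.mk fun n => if (0 + 1) ∣ n then (1 : ℕ) else 0 with hs
  refine ⟨∑ t ∈ Finset.range M, f (t + 1) + (X + X ^ 2 * (2 * s)), ?_, ?_⟩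
  · rw [EE, Finset.sum_range_succ', map_add, map_sum]
    congr 1
    · exact Finset.sum_congr rfl fun t _ => hf _
    · rw [cc_nat, GG, GG]
      simp only [map_add, map_mul, map_pow, hφ, map_ofNat, h1]
      have h3 := (h.one_sub_pow 0).1
      have h4 := (h.one_sub_pow 1).1
      simp only [zero_add, pow_one, mul_one, mul_zero, add_zero] at *
      rw [show 1 + 1 = 2 by norm_num] at h4
      field_simp
      ring
  · intro n hn
    obtain ⟨k, rfl⟩ := Nat.exists_eq_add_of_le hn
    rw [map_add, map_add, coeff_X_pow_mul', if_pos hn, Nat.add_sub_cancel_left]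
    have : coeff k (2 * s) = 2 := by
      rw [show (2 : ℕ⟦X⟧) = 1 + 1 by norm_num, add_mul, one_mul, map_add, hs, coeff_mk]; simp
    omega

end positivity

section genfun

open PowerSeries
open scoped PowerSeries.WithPiTopology

/-- generating function of overpartitions with parts at most `m`. -/
noncomputable def TP (w : ℂ) (m : ℕ) : ℂ⟦X⟧ :=
  Nat.Partition.genFun (fun i c => if i ≤ m then 2 * w ^ c else 0)

theorem factor_eq (w : ℂ) (i : ℕ) :
    (1 + ∑' j : ℕ, (2 * w ^ (j + 1)) • (X : ℂ⟦X⟧) ^ ((i + 1) * (j + 1))) *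
      (1 - C w * X ^ (i + 1)) = 1 + C w * X ^ (i + 1) := by
  have hs : Summable fun j : ℕ => (2 * w ^ (j + 1)) • (X : ℂ⟦X⟧) ^ ((i + 1) * (j + 1)) :=
    Nat.Partition.summable_genFun_term (fun _ c => 2 * w ^ c) i
  have h1 := hs.tsum_eq_zero_add
  have h2 : ∀ j : ℕ, (2 * w ^ (j + 1 + 1)) • (X : ℂ⟦X⟧) ^ ((i + 1) * (j + 1 + 1)) =
      (C w * X ^ (i + 1)) * ((2 * w ^ (j + 1)) • (X : ℂ⟦X⟧) ^ ((i + 1) * (j + 1))) := by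
    intro j
    rw [smul_eq_C_mul, smul_eq_C_mul]
    simp only [map_mul, map_pow]
    ring
  simp_rw [h2] at h1
  rw [hs.tsum_mul_left] at h1
  have h3 : (2 * w ^ (0 + 1)) • (X : ℂ⟦X⟧) ^ ((i + 1) * (0 + 1)) = 2 * (C w * X ^ (i + 1)) := by
    have h4 : (C (2 : ℂ) : ℂ⟦X⟧) = 2 := map_ofNat C 2
    rw [smul_eq_C_mul, map_mul, h4]; simp only [zero_add, pow_one, mul_one]; ring
  rw [h3] at h1
  linear_combination h1

theorem TP_prod (w : ℂ) (m : ℕ) : TP w m = ∏ i ∈ Finset.range m,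
    (1 + ∑' j : ℕ, (2 * w ^ (j + 1)) • (X : ℂ⟦X⟧) ^ ((i + 1) * (j + 1))) := by
  have h1 := Nat.Partition.hasProd_genFun (R := ℂ) (fun i c => if i ≤ m then 2 * w ^ c else 0)
  refine h1.unique ?_
  have h3 : ∏ i ∈ Finset.range m,
      (1 + ∑' j : ℕ, (2 * w ^ (j + 1)) • (X : ℂ⟦X⟧) ^ ((i + 1) * (j + 1))) =
      ∏ i ∈ Finset.range m, ((1 : ℂ⟦X⟧) + ∑' j : ℕ,
      (if i + 1 ≤ m then 2 * w ^ (j + 1) else 0) • (X : ℂ⟦X⟧) ^ ((i + 1) * (j + 1))) := by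
    refine Finset.prod_congr rfl fun i hi => ?_
    have : i + 1 ≤ m := by simp at hi; omega
    simp [this]
  rw [h3]
  exact hasProd_prod_of_ne_finset_one (by
      intro i hi
      have : ¬ (i + 1 ≤ m) := by simp at hi; omega
      simp [this])

theorem TP_zero (w : ℂ) : TP w 0 = 1 := by rw [TP_prod]; simp

theorem TP_succ (w : ℂ) (m : ℕ) :
    TP w (m + 1) * (1 - C w * X ^ (m + 1)) = TP w m * (1 + C w * X ^ (m + 1)) := by
  rw [TP_prod, TP_prod, Finset.prod_range_succ, mul_assoc, factor_eq]

theorem TP_coeff (w : ℂ) (m n : ℕ) : coeff n (TP w m) = ∑ p : n.Partition,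
    if p.parts.sup ≤ m then 2 ^ p.parts.toFinset.card * w ^ p.parts.card else 0 := by
  rw [TP, Nat.Partition.coeff_genFun]
  refine Finset.sum_congr rfl fun p _ => ?_
  rw [Finsupp.prod, Multiset.toFinsupp_support]
  simp only [Multiset.toFinsupp_apply]
  split_ifs with hp
  · have : ∀ i ∈ p.parts.toFinset, (if i ≤ m then 2 * w ^ (p.parts.count i) else 0) =
        2 * w ^ (p.parts.count i) := by
      intro i hi
      rw [if_pos ((Multiset.le_sup (by simpa using hi)).trans hp)]
    rw [Finset.prod_congr rfl this, Finset.prod_mul_distrib, Finset.prod_const,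
      Finset.prod_pow_eq_pow_sum, Multiset.toFinset_sum_count_eq]
  · have : ∃ i ∈ p.parts, ¬ i ≤ m := by
      by_contra hc; push Not at hc; exact hp (Multiset.sup_le.2 hc)
    obtain ⟨i, hi, hm⟩ := this
    exact Finset.prod_eq_zero (i := i) (by simpa using hi) (if_neg hm)

theorem sup_le_n {n : ℕ} (p : n.Partition) : p.parts.sup ≤ n :=
  Multiset.sup_le.2 fun i hi => by
    have := Multiset.single_le_sum (fun _ _ => Nat.zero_le _) i hi
    rwa [p.parts_sum] at this

theorem tele_z (z : ℂ) (s M : ℕ) (hs : s ≤ M) :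
    (if s ≤ 0 then (1 : ℂ) else 0) + ∑ m ∈ Finset.range M, z ^ (m + 1) *
      ((if s ≤ m + 1 then 1 else 0) - (if s ≤ m then 1 else 0)) = z ^ s := by
  rcases s with _ | s
  · simp
  · rw [if_neg (by omega), zero_add, Finset.sum_eq_single s]
    · simp
    · intro b _ hb
      by_cases h : s < b
      · rw [if_pos (by omega), if_pos (by omega)]; simp
      · rw [if_neg (by omega), if_neg (by omega)]; simp
    · intro h; simp at h; omega

/-- truncated rank generating function as a power series -/
noncomputable def RP (w z : ℂ) (M : ℕ) : ℂ⟦X⟧ :=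
  TP w 0 + ∑ m ∈ Finset.range M, C (z ^ (m + 1)) * (TP w (m + 1) - TP w m)

theorem RP_coeff (w z : ℂ) {M n : ℕ} (hn : n ≤ M) : coeff n (RP w z M) =
    ∑ p : n.Partition, z ^ p.parts.sup * (2 ^ p.parts.toFinset.card * w ^ p.parts.card) := by
  rw [RP, map_add, map_sum]
  simp_rw [coeff_C_mul, map_sub, TP_coeff, ← Finset.sum_sub_distrib, Finset.mul_sum]
  rw [Finset.sum_comm, ← Finset.sum_add_distrib]
  refine Finset.sum_congr rfl fun p _ => ?_
  rw [← tele_z z _ _ ((sup_le_n p).trans hn), add_mul, Finset.sum_mul]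
  congr 1
  · rw [ite_mul, one_mul, zero_mul]
  · refine Finset.sum_congr rfl fun m _ => ?_
    split_ifs <;> ring

end genfun


section concrete

open PowerSeries

/-- The field of Laurent series, as a fraction field. -/
abbrev KK : Type := FractionRing ℂ⟦X⟧

/-- The embedding of power series. -/
noncomputable def io : ℂ⟦X⟧ →+* KK := algebraMap ℂ⟦X⟧ KK

theorem io_inj : Function.Injective io := IsFractionRing.injective ℂ⟦X⟧ KK

theorem loc_KK : Loc io.range (io X) where
  mem := ⟨X, rfl⟩
  ne := by
    rw [Ne, map_eq_zero_iff _ io_inj]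
    exact X_ne_zero
  inv := by
    rintro _ ⟨u, rfl⟩
    have h1 : IsUnit (1 + X * u : ℂ⟦X⟧) := by
      rw [PowerSeries.isUnit_iff_constantCoeff]; simp
    obtain ⟨v, hv⟩ := h1.exists_right_inv
    have h2 : (1 + io X * io u) * io v = 1 := by
      rw [← map_mul, ← map_one io, ← map_add, ← map_mul, hv]
    refine ⟨left_ne_zero_of_mul_eq_one h2, ?_⟩
    rw [← eq_inv_of_mul_eq_one_right h2]
    exact ⟨v, rfl⟩

theorem coeff_of_Cg {N : ℕ} {a b : ℂ⟦X⟧} (h : Cg io.range (io X) N (io a) (io b)) {n : ℕ}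
    (hn : n < N) : coeff n a = coeff n b := by
  rw [Cg, II_iff] at h
  obtain ⟨_, ⟨c, rfl⟩, hc⟩ := h
  rw [← map_pow, ← map_mul, ← map_sub] at hc
  have h1 := congrArg (coeff n) (io_inj hc)
  rw [coeff_X_pow_mul', if_neg (by omega), map_sub] at h1
  exact (sub_eq_zero.1 h1.symm)

theorem io_TP (w : ℂ) (m : ℕ) : io (TP w m) = TT (io (C w)) (io X) m := by
  induction m with
  | zero => simp [TP_zero, TT]
  | succ m ih =>
    have h1 := (loc_KK.w_sub (w := io (C w)) ⟨_, rfl⟩ m).1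
    have h2 := congrArg io (TP_succ w m)
    simp only [map_mul, map_sub, map_add, map_one, map_pow] at h2
    rw [TT, Finset.prod_range_succ, ← TT, ← ih, ← mul_div_assoc, eq_div_iff h1, h2]

theorem io_RP (w z : ℂ) (hz : z * w = 1) (M : ℕ) :
    io (RP w z M) = GF (io (C w)) (io (C z)) (io X) M := by
  rw [RP, GF, map_add, TP_zero, map_one, map_sum, Finset.mul_sum]
  congr 1
  refine Finset.sum_congr rfl fun m _ => ?_
  have h1 := (loc_KK.w_sub (w := io (C w)) ⟨_, rfl⟩ m).1
  have hz' : io (C z) * io (C w) = 1 := by rw [← map_mul, ← map_mul, hz, map_one, map_one]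
  rw [map_mul, map_sub, io_TP, io_TP, TT, Finset.prod_range_succ, ← TT, map_pow, map_pow]
  generalize io (C z) = zz at *
  generalize io (C w) = ww at *
  field_simp
  linear_combination (2 * zz ^ m * io X ^ (m + 1) * TT ww (io X) m) * hz'

theorem A_coeff (n : ℕ) (hn : 2 ≤ n) : ∃ e : ℕ, 2 ≤ e ∧
    ∑ p : n.Partition, (-1 : ℂ) ^ p.parts.sup *
      (2 ^ p.parts.toFinset.card * (-1) ^ p.parts.card) = - 2 * (-1) ^ n * e := by
  obtain ⟨k, rfl⟩ : ∃ k, n = k + 1 := ⟨n - 1, by omega⟩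
  obtain ⟨g, hg, hg2⟩ := E_pos (loc_KK.neg)
    (io.comp (evalNegHom.comp (PowerSeries.map (Nat.castRingHom ℂ)))) (by simp [evalNegHom_X]) k
  refine ⟨coeff (k + 1) g, hg2 _ hn, ?_⟩
  rw [← RP_coeff (-1) (-1) le_rfl]
  have h1 := A_final loc_KK (k + 1)
  rw [← hg] at h1
  have h2 : GF (-1) (-1) (io X) (k + 1) = io (RP (-1) (-1) (k + 1)) := by
    rw [io_RP _ _ (by norm_num)]; simp
  set r : ℂ⟦X⟧ := evalNegHom (PowerSeries.map (Nat.castRingHom ℂ) g) with hr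
  have h3 : (1 : KK) - 2 * (io.comp (evalNegHom.comp (PowerSeries.map (Nat.castRingHom ℂ)))) g
      = io (1 - C 2 * r) := by
    rw [map_sub, map_mul, map_one, map_ofNat, map_ofNat]; rfl
  rw [h2, h3] at h1
  rw [coeff_of_Cg h1 (Nat.lt_succ_self _), map_sub, coeff_C_mul, hr, evalNegHom, coeff_rescale,
    coeff_map, coeff_one, if_neg (by omega)]
  simp
  ring

theorem B_coeff (n : ℕ) (hn : 1 ≤ n) : ∃ e : ℕ, e ≤ 2 ∧
    ∑ p : n.Partition, (Complex.I : ℂ) ^ p.parts.sup *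
      (2 ^ p.parts.toFinset.card * (-Complex.I) ^ p.parts.card) = e := by
  rw [← RP_coeff (-Complex.I) Complex.I le_rfl]
  have h1 := B_final loc_KK (w := io (C (-Complex.I))) ⟨_, rfl⟩
    (by rw [← map_mul, ← map_mul]; simp) n
  have h2 : -io (C (-Complex.I)) = io (C Complex.I) := by simp
  have h3 : (1 : KK) + 2 * ∑ d ∈ Finset.range n, io X ^ ((d + 1) * (d + 1)) =
      io (1 + C 2 * ∑ d ∈ Finset.range n, X ^ ((d + 1) * (d + 1))) := by
    rw [map_add, map_mul, map_one, map_ofNat, map_ofNat, map_sum]; simp only [map_pow]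
  rw [h2, ← io_RP _ _ (by simp), h3] at h1
  rw [coeff_of_Cg h1 (Nat.lt_succ_self _), map_add, coeff_C_mul, coeff_one, if_neg (by omega),
    map_sum, zero_add]
  simp_rw [coeff_X_pow]
  by_cases hs : ∃ d ∈ Finset.range n, n = (d + 1) * (d + 1)
  · obtain ⟨d, hd, hd2⟩ := hs
    refine ⟨2, le_rfl, ?_⟩
    rw [Finset.sum_eq_single_of_mem d hd, if_pos hd2]
    · simp
    · intro b _ hb
      rw [if_neg]
      rintro h
      rw [hd2] at h
      have := Nat.mul_self_inj.1 h
      omega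
  · push Not at hs
    refine ⟨0, by norm_num, ?_⟩
    rw [Finset.sum_eq_zero fun d hd => if_neg (hs d hd)]
    simp

end concrete

section combinatorics

theorem nbar_eq_s11 (a : ℤ) (n : ℕ) : nbar a 4 n = ∑ p : n.Partition,
    if (p.parts.sup : ℤ) - p.parts.card ≡ a [ZMOD 4] then 2 ^ p.parts.toFinset.card else 0 := by
  classical
  rw [nbar, ← Finset.sum_filter]
  let e : {P : Overpartition n // P.rank ≡ a [ZMOD ((4 : ℕ) : ℤ)]} ≃
      Σ p : {p : n.Partition // (p.parts.sup : ℤ) - p.parts.card ≡ a [ZMOD 4]},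
        {s : Finset ℕ // s ∈ p.1.parts.toFinset.powerset} :=
    { toFun := fun P => ⟨⟨P.1.1.1, P.2⟩, ⟨P.1.1.2, Finset.mem_powerset.2 P.1.2⟩⟩
      invFun := fun x => ⟨⟨(x.1.1, x.2.1), Finset.mem_powerset.1 x.2.2⟩, x.1.2⟩
      left_inv := fun _ => rfl
      right_inv := fun _ => rfl }
  rw [Nat.card_congr e, Nat.card_sigma]
  rw [Finset.sum_subtype (p := fun p : n.Partition =>
    (p.parts.sup : ℤ) - p.parts.card ≡ a [ZMOD 4]) _ (by simp)]
  refine Finset.sum_congr rfl fun p _ => ?_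
  rw [Nat.card_eq_fintype_card, Fintype.card_coe, Finset.card_powerset]

theorem pow_rank (z w : ℂ) (hz : z * w = 1) (h4 : z ^ 4 = 1) (s k : ℕ) :
    z ^ s * w ^ k =
      (if (s : ℤ) - k ≡ 0 [ZMOD 4] then 1 else 0) + (if (s : ℤ) - k ≡ 1 [ZMOD 4] then 1 else 0) * z
      + (if (s : ℤ) - k ≡ 2 [ZMOD 4] then 1 else 0) * z ^ 2
      + (if (s : ℤ) - k ≡ 3 [ZMOD 4] then 1 else 0) * z ^ 3 := by
  have hz0 : z ≠ 0 := left_ne_zero_of_mul_eq_one hz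
  have hw : w = z⁻¹ := eq_inv_of_mul_eq_one_right hz
  have h1 : z ^ s * w ^ k = z ^ ((s : ℤ) - k) := by
    rw [hw, zpow_sub₀ hz0, zpow_natCast, zpow_natCast, inv_pow, div_eq_mul_inv]
  rw [h1]
  generalize (s : ℤ) - k = r
  have h2 : z ^ r = z ^ (r % 4) := by
    conv_lhs => rw [← Int.emod_add_mul_ediv r 4]
    rw [zpow_add₀ hz0, zpow_mul]
    have : z ^ (4 : ℤ) = 1 := by exact_mod_cast h4
    rw [this, one_zpow, mul_one]
  rw [h2]
  have hm : ∀ b : ℤ, (if r ≡ b [ZMOD 4] then (1 : ℂ) else 0) = if r % 4 = b % 4 then 1 else 0 :=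
    fun b => if_congr Iff.rfl rfl rfl
  rw [hm, hm, hm, hm]
  have h3 : r % 4 = 0 ∨ r % 4 = 1 ∨ r % 4 = 2 ∨ r % 4 = 3 := by omega
  rcases h3 with h | h | h | h <;> simp only [h]
  · norm_num
  · norm_num
  · norm_num
  · norm_num

theorem sum_nbar (z w : ℂ) (hz : z * w = 1) (h4 : z ^ 4 = 1) (n : ℕ) :
    ∑ p : n.Partition, z ^ p.parts.sup * (2 ^ p.parts.toFinset.card * w ^ p.parts.card) =
      nbar 0 4 n + nbar 1 4 n * z + nbar 2 4 n * z ^ 2 + nbar 3 4 n * z ^ 3 := by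
  rw [nbar_eq_s11, nbar_eq_s11, nbar_eq_s11, nbar_eq_s11]
  push_cast
  rw [Finset.sum_mul, Finset.sum_mul, Finset.sum_mul, ← Finset.sum_add_distrib,
    ← Finset.sum_add_distrib, ← Finset.sum_add_distrib]
  refine Finset.sum_congr rfl fun p _ => ?_
  have h := pow_rank z w hz h4 p.parts.sup p.parts.card
  have h5 : z ^ p.parts.sup * (2 ^ p.parts.toFinset.card * w ^ p.parts.card) =
    2 ^ p.parts.toFinset.card * (z ^ p.parts.sup * w ^ p.parts.card) := by ring
  rw [h5, h]
  simp only [mul_add, ite_mul, mul_ite, one_mul, mul_one, zero_mul, mul_zero]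

theorem main_rel (n : ℕ) (hn : 2 ≤ n) : ∃ e f : ℕ, 2 ≤ e ∧ f ≤ 2 ∧
    (nbar 0 4 n : ℤ) - nbar 1 4 n + nbar 2 4 n - nbar 3 4 n = - 2 * (-1) ^ n * e ∧
    (nbar 0 4 n : ℤ) - nbar 2 4 n = f ∧ nbar 1 4 n = nbar 3 4 n := by
  obtain ⟨e, he, hA⟩ := A_coeff n hn
  obtain ⟨f, hf, hB⟩ := B_coeff n (by omega)
  rw [sum_nbar (-1) (-1) (by norm_num) (by norm_num)] at hA
  rw [sum_nbar Complex.I (-Complex.I) (by simp) (by simp)] at hB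
  refine ⟨e, f, he, hf, ?_, ?_⟩
  · have h1 : (nbar 0 4 n : ℂ) - nbar 1 4 n + nbar 2 4 n - nbar 3 4 n = - 2 * (-1) ^ n * e := by
      rw [← hA]; ring
    exact_mod_cast h1
  · have h2 : ((nbar 0 4 n : ℂ) - nbar 2 4 n) + (nbar 1 4 n - nbar 3 4 n) * Complex.I = f := by
      rw [← hB, Complex.I_sq, Complex.I_pow_three]; ring
    have hre := congrArg Complex.re h2
    have him := congrArg Complex.im h2
    simp at hre him
    constructor
    · exact_mod_cast hre
    · have : (nbar 1 4 n : ℝ) = nbar 3 4 n := by linarith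
      exact_mod_cast this

end combinatorics

theorem stmt11 :
    (∀ n : ℕ, 3 ≤ n → Odd n → nbar 1 4 n < nbar 2 4 n) ∧
    (∀ n : ℕ, 2 ≤ n → Even n → nbar 2 4 n < nbar 1 4 n) := by
  constructor
  · intro n hn ho
    obtain ⟨e, f, he, hf, h1, h2, h3⟩ := main_rel n (by omega)
    rw [ho.neg_one_pow] at h1
    omega
  · intro n hn ho
    obtain ⟨e, f, he, hf, h1, h2, h3⟩ := main_rel n hn
    rw [ho.neg_one_pow] at h1
    omega
end
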